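/- arXiv:2405.19239 — 4 statements merged into one kernel-verified Lean document; each statement's English description precedes it below -/
import Mathlib

section
/- Let f ∈ R := MvPolynomial ℂ (Fin 2) be squarefree. Then the quotient A ⧸ Ideal.span {ι f, ι(v_f)} is NOT a finite-dimensional ℂ-vector space if and only if either there exist a, b ∈ ℂ with (a,b) ≠ (0,0) such that a·X + b·Y divides f in R, or there exist a, b, c ∈ ℂ with a² + b² = c² such that (X − a)² + (Y − b)² − c² divides f in R. -/
open MvPolynomial

noncomputable section

/-- Partial derivative with respect to the first variable `X`. -/
def dx (f : MvPolynomial (Fin 2) ℂ) : MvPolynomial (Fin 2) ℂ := pderiv 0 f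

/-- Partial derivative with respect to the second variable `Y`. -/
def dy (f : MvPolynomial (Fin 2) ℂ) : MvPolynomial (Fin 2) ℂ := pderiv 1 f

/-- The inflection polynomial `i_f = f_y²·f_xx − 2·f_x·f_y·f_xy + f_x²·f_yy`. -/
def infl (f : MvPolynomial (Fin 2) ℂ) : MvPolynomial (Fin 2) ℂ :=
  (dy f) ^ 2 * dx (dx f) - 2 * dx f * dy f * dy (dx f) + (dx f) ^ 2 * dy (dy f)

/-- The vertex polynomial
`v_f = (f_x² + f_y²)(f_x³ f_yyy − 3 f_x² f_y f_xyy + 3 f_x f_y² f_xxy − f_y³ f_xxx)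
      − 3((f_x² − f_y²) f_xy − f_x f_y (f_xx − f_yy)) · i_f`. -/
def vert (f : MvPolynomial (Fin 2) ℂ) : MvPolynomial (Fin 2) ℂ :=
  ((dx f) ^ 2 + (dy f) ^ 2) *
      ((dx f) ^ 3 * dy (dy (dy f)) - 3 * (dx f) ^ 2 * dy f * dy (dy (dx f)) +
        3 * dx f * (dy f) ^ 2 * dy (dx (dx f)) - (dy f) ^ 3 * dx (dx (dx f))) -
    3 * (((dx f) ^ 2 - (dy f) ^ 2) * dy (dx f) - dx f * dy f * (dx (dx f) - dy (dy f))) *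
      infl f

/-- The canonical map from polynomials to formal power series in two variables. -/
def ι : MvPolynomial (Fin 2) ℂ →+* MvPowerSeries (Fin 2) ℂ :=
  MvPolynomial.coeToMvPowerSeries.ringHom

/-- The local intersection number at the origin of the curves `g = 0` and `h = 0`:
the `ℂ`-dimension of `ℂ⟦x,y⟧/⟨g,h⟩`. -/
def interMult (g h : MvPolynomial (Fin 2) ℂ) : ℕ :=
  Module.finrank ℂ (MvPowerSeries (Fin 2) ℂ ⧸ Ideal.span {ι g, ι h})

end

lemma comm_dxdy (f : MvPolynomial (Fin 2) ℂ) : dx (dy f) = dy (dx f) := by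
  unfold dx dy
  ext m
  simp only [coeff_pderiv]
  rw [add_right_comm]
  simp
  ring

lemma exists_deriv (p : MvPolynomial (Fin 2) ℂ) (K : Type) [Field K] [Algebra ℂ K]
    (B : Type) [CommRing B] [IsDomain B] [Algebra ℂ B] [Algebra B K] [IsFractionRing B K]
    [IsScalarTower ℂ B K]
    (q : MvPolynomial (Fin 2) ℂ →ₐ[ℂ] B) (hq : Function.Surjective q)
    (hq0 : ∀ r, q r = 0 ↔ p ∣ r) :
    ∃ D : Derivation ℂ K K, ∀ r, D (algebraMap B K (q r)) =
      algebraMap B K (q (dx p * dy r - dy p * dx r)) := by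
  let π : MvPolynomial (Fin 2) ℂ →ₐ[ℂ] K := (IsScalarTower.toAlgHom ℂ B K).comp q
  have hπ : ∀ r, π r = algebraMap B K (q r) := fun r => rfl
  let φ : MvPolynomial (Fin 2) ℂ →ₐ[ℂ] DualNumber K :=
    { toFun := fun r => TrivSqZeroExt.inl (π r) +
          TrivSqZeroExt.inr (π (dx p * dy r - dy p * dx r))
      map_one' := by ext <;> simp [dx, dy]
      map_zero' := by ext <;> simp [dx, dy]
      map_mul' := by
        intro a b
        ext
        · simp
        · simp [dx, dy]; ring
      map_add' := by
        intro a b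
        ext
        · simp
        · simp [dx, dy]; ring
      commutes' := by
        intro a
        ext
        · simp [TrivSqZeroExt.algebraMap_eq_inl']
        · simp [dx, dy, TrivSqZeroExt.algebraMap_eq_inl', MvPolynomial.algebraMap_eq] }
  have hφ1 : ∀ r, (φ r).fst = π r := fun r => by simp [φ]
  have hφ2 : ∀ r, (φ r).snd = π (dx p * dy r - dy p * dx r) := fun r => by simp [φ]
  have hker : RingHom.ker q ≤ RingHom.ker φ := by
    intro r hr
    rw [RingHom.mem_ker] at hr ⊢
    obtain ⟨s, rfl⟩ := (hq0 r).1 hr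
    have hp : π p = 0 := by rw [hπ, (hq0 p).2 dvd_rfl, map_zero]
    ext
    · simp [hφ1, hp]
    · rw [hφ2]
      simp only [dx, dy, pderiv_mul, map_sub, map_mul, map_add, hp, TrivSqZeroExt.snd_zero]
      ring
  let φB : B →ₐ[ℂ] DualNumber K := AlgHom.liftOfSurjective q hq φ hker
  have hφB : ∀ r, φB (q r) = φ r := fun r => AlgHom.liftOfSurjective_apply q hq φ hker r
  have hu : ∀ y : nonZeroDivisors B, IsUnit (φB y) := by
    rintro ⟨y, hy⟩
    obtain ⟨r, rfl⟩ := hq y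
    rw [TrivSqZeroExt.isUnit_iff_isUnit_fst]
    simp only [hφB, hφ1]
    rw [isUnit_iff_ne_zero, hπ]
    simpa using nonZeroDivisors.ne_zero hy
  let ψ : K →ₐ[ℂ] DualNumber K := IsLocalization.liftAlgHom (M := nonZeroDivisors B) (f := φB) hu
  have hψ : ∀ b, ψ (algebraMap B K b) = φB b := fun b => IsLocalization.lift_eq _ b
  have hψ1 : ∀ k, (ψ k).fst = k := by
    have : ((TrivSqZeroExt.fstHom ℂ K K).comp ψ : K →ₐ[ℂ] K).toRingHom = RingHom.id K := by
      apply IsLocalization.ringHom_ext (nonZeroDivisors B)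
      ext b
      obtain ⟨r, rfl⟩ := hq b
      simp [hψ, hφB, hφ1, hπ]
    intro k
    exact congrArg (fun g : K →+* K => g k) this
  refine ⟨Derivation.mk' { toFun := fun k => (ψ k).snd, map_add' := ?_, map_smul' := ?_ } ?_, ?_⟩
  · intro a b; simp
  · intro a b; simp
  · intro a b
    simp [hψ1, mul_comm]
  · intro r
    simp [hψ, hφB, hφ2, hπ]

open Algebra in
lemma trdeg_le (p : MvPolynomial (Fin 2) ℂ) (hp : p ≠ 0) (K : Type) [Field K] [Algebra ℂ K]
    (B : Type) [CommRing B] [IsDomain B] [Algebra ℂ B] [Algebra B K] [IsFractionRing B K]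
    [IsScalarTower ℂ B K]
    (q : MvPolynomial (Fin 2) ℂ →ₐ[ℂ] B) (hq : Function.Surjective q)
    (hq0 : ∀ r, q r = 0 ↔ p ∣ r) : Algebra.trdeg ℂ K ≤ 1 := by
  have h1 : Algebra.trdeg ℂ K = Algebra.trdeg ℂ B := by
    have : Algebra.IsAlgebraic B K := IsLocalization.isAlgebraic (R := B) (S := K) (nonZeroDivisors B)
    rw [← trdeg_add_eq ℂ B, trdeg_eq_zero_iff.2 this, add_zero]
  rw [h1]
  by_contra hlt
  have h2 : 2 ≤ Algebra.trdeg ℂ B := by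
    rw [not_le] at hlt
    exact Cardinal.two_le_iff_one_lt.2 hlt
  let x : Fin 2 → B := fun i => q (X i)
  have htop : Algebra.adjoin ℂ (Set.range x) = ⊤ := by
    have : Set.range x = q '' (Set.range X) := by rw [← Set.range_comp]; rfl
    rw [this, ← AlgHom.map_adjoin, MvPolynomial.adjoin_range_X, Algebra.map_top]
    exact (AlgHom.range_eq_top q).2 hq
  have : Algebra.IsAlgebraic (Algebra.adjoin ℂ (Set.range x)) B := by
    rw [htop]
    exact ⟨fun b => isAlgebraic_algebraMap (R := (⊤ : Subalgebra ℂ B)) ⟨b, trivial⟩⟩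
  have hb : IsTranscendenceBasis ℂ x := 
    Algebra.IsAlgebraic.isTranscendenceBasis_of_le_trdeg_of_finite ℂ x (by simpa using h2)
  have hinj := hb.1
  have h0 : aeval x p = 0 := by
    have : aeval x = q := by ext i; simp [x]
    rw [this]; exact (hq0 p).2 dvd_rfl
  exact hp ((injective_iff_map_eq_zero _).1 hinj p h0)

theorem exists_K (p : MvPolynomial (Fin 2) ℂ) (hp : Irreducible p) :
    ∃ (K : Type) (_ : Field K) (_ : Algebra ℂ K) (π : MvPolynomial (Fin 2) ℂ →ₐ[ℂ] K)
      (D : Derivation ℂ K K), (∀ r, π r = 0 ↔ p ∣ r) ∧ Algebra.trdeg ℂ K ≤ 1 ∧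
      (∀ r, D (π r) = π (dx p * dy r - dy p * dx r)) := by
  have hpr : (Ideal.span {p}).IsPrime := (Ideal.span_singleton_prime hp.ne_zero).2 hp.prime
  let B := MvPolynomial (Fin 2) ℂ ⧸ Ideal.span {p}
  let q : MvPolynomial (Fin 2) ℂ →ₐ[ℂ] B := Ideal.Quotient.mkₐ ℂ _
  have hq : Function.Surjective q := Ideal.Quotient.mkₐ_surjective _ _
  have hq0 : ∀ r, q r = 0 ↔ p ∣ r := fun r => by
    rw [← Ideal.mem_span_singleton]; exact Ideal.Quotient.eq_zero_iff_mem
  obtain ⟨D, hD⟩ := exists_deriv p (FractionRing B) B q hq hq0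
  refine ⟨FractionRing B, inferInstance, inferInstance,
    (IsScalarTower.toAlgHom ℂ B (FractionRing B)).comp q, D, ?_,
    trdeg_le p hp.ne_zero _ B q hq hq0, ?_⟩
  · intro r
    rw [← hq0]
    simp
  · intro r; exact hD r

lemma const_of_deriv_zero (K : Type) [Field K] [Algebra ℂ K] (D : Derivation ℂ K K)
    (htr : Algebra.trdeg ℂ K ≤ 1) (x : K) (hx : D x ≠ 0) (w : K) (hw : D w = 0) :
    ∃ c : ℂ, w = algebraMap ℂ K c := by
  by_cases halg : IsAlgebraic ℂ w
  · have := IntermediateField.isAlgebraic_adjoin_simple halg.isIntegral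
    obtain ⟨c, hc⟩ := IsAlgClosed.algebraMap_bijective_of_isIntegral (k := ℂ)
      (K := IntermediateField.adjoin ℂ {w}) |>.2 ⟨w, IntermediateField.mem_adjoin_simple_self ℂ w⟩
    exact ⟨c, (congrArg Subtype.val hc).symm⟩
  exfalso
  have hind : AlgebraicIndependent ℂ (fun _ : Unit => w) := by
    rw [algebraicIndependent_unique_type_iff]
    exact halg
  have hb := hind.isTranscendenceBasis_of_trdeg_le_of_finite (by simpa using htr)
  have hA := hb.isAlgebraic_field
  set F := IntermediateField.adjoin ℂ (Set.range (fun _ : Unit => w)) with hF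
  have hDF : ∀ y ∈ F, D y = 0 := by
    intro y hy
    induction hy using IntermediateField.adjoin_induction with
    | mem x hx => obtain ⟨_, rfl⟩ := hx; exact hw
    | algebraMap x => simp
    | add x y hx hy h1 h2 => simp [h1, h2]
    | inv x hx h => simp [Derivation.leibniz_inv, h]
    | mul x y hx hy h1 h2 => simp [h1, h2]
  let D' : Derivation F K K := Derivation.mk'
    { toFun := D, map_add' := map_add D, map_smul' := by
        intro c k
        simp [Algebra.smul_def, hDF c c.2] } (by intro a b; simp)
  have hint : IsIntegral F x := (hA.isAlgebraic x).isIntegral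
  have h1 := D'.map_aeval (minpoly F x) x
  rw [minpoly.aeval, map_zero] at h1
  have h2 : Polynomial.aeval x (Polynomial.derivative (minpoly F x)) ≠ 0 :=
    (minpoly.irreducible hint).separable.aeval_derivative_ne_zero (minpoly.aeval F x)
  rcases smul_eq_zero.1 h1.symm with h | h
  · exact h2 h
  · exact hx h

lemma dx_mul (f g) : dx (f * g) = dx f * g + f * dx g := pderiv_mul
lemma dy_mul (f g) : dy (f * g) = dy f * g + f * dy g := pderiv_mul
lemma dx_add (f g) : dx (f + g) = dx f + dx g := map_add _ _ _
lemma dy_add (f g) : dy (f + g) = dy f + dy g := map_add _ _ _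
lemma dx_sub (f g) : dx (f - g) = dx f - dx g := map_sub _ _ _
lemma dy_sub (f g) : dy (f - g) = dy f - dy g := map_sub _ _ _
lemma dx_C (a) : dx (C a) = 0 := pderiv_C
lemma dy_C (a) : dy (C a) = 0 := pderiv_C
lemma dx_0 : dx 0 = 0 := map_zero _
lemma dy_0 : dy 0 = 0 := map_zero _
lemma dx_1 : dx 1 = 0 := pderiv_one
lemma dy_1 : dy 1 = 0 := pderiv_one
lemma dx_2 : dx 2 = 0 := dx_C 2
lemma dy_2 : dy 2 = 0 := dy_C 2
lemma dx_X0 : dx (X 0) = 1 := pderiv_X_self 0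
lemma dy_X0 : dy (X 0) = 0 := pderiv_X_of_ne (by decide)
lemma dx_X1 : dx (X 1) = 0 := pderiv_X_of_ne (by decide)
lemma dy_X1 : dy (X 1) = 1 := pderiv_X_self 1

lemma vert_mul (p g : MvPolynomial (Fin 2) ℂ) : p ∣ vert (p * g) - g ^ 6 * vert p := by
  rw [← Ideal.mem_span_singleton, ← Ideal.Quotient.eq_zero_iff_mem]
  have hp : Ideal.Quotient.mk (Ideal.span {p}) p = 0 :=
    Ideal.Quotient.eq_zero_iff_mem.2 (Ideal.mem_span_singleton_self p)
  simp only [vert, infl, dx_mul, dy_mul, dx_add, dy_add]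
  simp only [map_sub, map_add, map_mul, map_pow, hp, map_ofNat]
  ring

lemma vert_line (a b : ℂ) : vert (C a * X 0 + C b * X 1) = 0 := by
  simp only [vert, infl, dx_mul, dy_mul, dx_add, dy_add, dx_C, dy_C, dx_X0, dx_X1, dy_X0, dy_X1,
    dx_0, dy_0, dx_1, dy_1]
  ring

lemma vert_circle (a b c : ℂ) : (((X 0 - C a) ^ 2 + (X 1 - C b) ^ 2 - C c ^ 2) :
    MvPolynomial (Fin 2) ℂ) ∣ vert ((X 0 - C a) ^ 2 + (X 1 - C b) ^ 2 - C c ^ 2) := by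
  have : vert ((X 0 - C a) ^ 2 + (X 1 - C b) ^ 2 - C c ^ 2) = 0 := by
    simp only [vert, infl, dx_mul, dy_mul, dx_add, dy_add, dx_sub, dy_sub, pow_succ, pow_zero,
      dx_C, dy_C, dx_X0, dx_X1, dy_X0, dy_X1, dx_0, dy_0, dx_1, dy_1]
    ring
  rw [this]; exact dvd_zero _

lemma deg_deriv (i : Fin 2) (p : MvPolynomial (Fin 2) ℂ) (h : pderiv i p ≠ 0) :
    (pderiv i p).totalDegree < p.totalDegree := by
  obtain ⟨m, hm, hd⟩ := Finset.exists_mem_eq_sup _ (support_nonempty.2 h) (fun s => s.degree)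
  have hm' : m + Finsupp.single i 1 ∈ p.support := by
    rw [mem_support_iff, coeff_pderiv] at hm
    rw [mem_support_iff]
    exact left_ne_zero_of_mul hm
  have h1 := le_totalDegree hm'
  have h2 : (pderiv i p).totalDegree = m.degree := by
    rw [← hd]; rfl
  have h3 : (m + Finsupp.single i 1).degree = m.degree + 1 := by simp
  have h4 : ((m + Finsupp.single i 1).sum fun x e => e) = (m + Finsupp.single i 1).degree := rfl
  omega

lemma not_dvd_both (p : MvPolynomial (Fin 2) ℂ) (hp : Irreducible p) :
    ¬ (p ∣ dx p ∧ p ∣ dy p) := by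
  have key : ∀ i, p ∣ pderiv i p → pderiv i p = 0 := by
    intro i hd
    by_contra hne
    have h1 := deg_deriv i p hne
    have h2 := totalDegree_le_of_dvd_of_isDomain hd hne
    omega
  rintro ⟨h0, h1⟩
  have hz : ∀ i, pderiv i p = 0 := by
    intro i; fin_cases i
    · exact key 0 h0
    · exact key 1 h1
  have hC : p = C (coeff 0 p) := by
    ext m
    rw [coeff_C]
    split_ifs with hm
    · rw [hm]
    · obtain ⟨i, hi⟩ : ∃ i, m i ≠ 0 := by
        by_contra hcon
        push Not at hcon
        exact hm (by ext i; simp [hcon i])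
      have e : m - Finsupp.single i 1 + Finsupp.single i 1 = m := by
        apply tsub_add_cancel_of_le
        rw [Finsupp.single_le_iff]; omega
      have := coeff_pderiv (i := i) p (m - Finsupp.single i 1)
      rw [hz i, e, coeff_zero] at this
      rcases mul_eq_zero.1 this.symm with h | h
      · exact h
      · exfalso
        exact Nat.cast_add_one_ne_zero (R := ℂ) _ h
  have hne : coeff 0 p ≠ 0 := by
    intro h; rw [h, C_0] at hC; exact hp.ne_zero hC
  exact hp.not_isUnit (by rw [hC]; exact (isUnit_iff_ne_zero.2 hne).map C)

theorem core (p : MvPolynomial (Fin 2) ℂ) (hp : Irreducible p) (hv : p ∣ vert p) :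
    (∃ a b c : ℂ, (a, b) ≠ (0, 0) ∧ p ∣ C a * X 0 + C b * X 1 - C c) ∨
    (∃ a b c : ℂ, p ∣ (X 0 - C a) ^ 2 + (X 1 - C b) ^ 2 - C c) := by
  obtain ⟨K, _, _, π, D, h0, htr, hD⟩ := exists_K p hp
  have hx : D (π (X 0)) = - π (dy p) := by rw [hD, dx_X0, dy_X0]; simp
  have hy : D (π (X 1)) = π (dx p) := by rw [hD, dx_X1, dy_X1]; simp
  have hπC : ∀ c : ℂ, π (C c) = algebraMap ℂ K c := fun c => π.commutes c
  have hconst : ∀ w, D w = 0 → ∃ c : ℂ, w = algebraMap ℂ K c := by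
    intro w hw
    by_cases hb : D (π (X 0)) = 0
    · by_cases ha : D (π (X 1)) = 0
      · exfalso
        rw [hx, neg_eq_zero, h0] at hb
        rw [hy, h0] at ha
        exact not_dvd_both p hp ⟨ha, hb⟩
      · exact const_of_deriv_zero K D htr _ ha w hw
    · exact const_of_deriv_zero K D htr _ hb w hw
  have hDC : ∀ c : ℂ, D (algebraMap ℂ K c) = 0 := fun c => D.map_algebraMap c
  have hDa : D (π (dx p)) = π (dx p) * π (dy (dx p)) - π (dy p) * π (dx (dx p)) := by
    rw [hD]; simp
  have hDb : D (π (dy p)) = π (dx p) * π (dy (dy p)) - π (dy p) * π (dy (dx p)) := by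
    rw [hD, comm_dxdy]; simp
  have hDi : D (π (infl p)) = π ((dx p) ^ 3 * dy (dy (dy p)) - 3 * (dx p) ^ 2 * dy p * dy (dy (dx p)) +
        3 * dx p * (dy p) ^ 2 * dy (dx (dx p)) - (dy p) ^ 3 * dx (dx (dx p))) := by
    rw [hD]
    congr 1
    simp only [infl, pow_succ, pow_zero, dx_mul, dy_mul, dx_add, dy_add, dx_sub, dy_sub, dx_1, dy_1,
      dx_2, dy_2, comm_dxdy]
    ring
  have hi : π (infl p) = π (dy p) ^ 2 * π (dx (dx p)) - 2 * π (dx p) * π (dy p) * π (dy (dx p))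
      + π (dx p) ^ 2 * π (dy (dy p)) := by
    simp [infl, map_ofNat π 2]
  have hV := (h0 _).2 hv
  unfold vert at hV
  rw [map_sub, map_mul, ← hDi] at hV
  simp only [map_sub, map_add, map_mul, map_pow, map_ofNat] at hV
  generalize π (infl p) = I at *
  generalize π (dy (dx p)) = pxy at *
  generalize π (dx (dx p)) = pxx at *
  generalize π (dy (dy p)) = pyy at *
  generalize π (dx p) = a at *
  generalize π (dy p) = b at *
  have hline : ∀ α β : ℂ, (α, β) ≠ (0, 0) →
      algebraMap ℂ K α * a + algebraMap ℂ K β * b = 0 →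
      ∃ a b c : ℂ, (a, b) ≠ (0, 0) ∧ p ∣ C a * X 0 + C b * X 1 - C c := by
    intro α β hne h
    obtain ⟨c, hc⟩ := hconst (algebraMap ℂ K β * π (X 0) + algebraMap ℂ K (-α) * π (X 1)) (by
      simp only [map_add, Derivation.leibniz, hDC, hx, hy, smul_eq_mul, map_neg]
      linear_combination -h)
    refine ⟨β, -α, c, ?_, ?_⟩
    · simpa [and_comm] using hne
    · rw [← h0]
      simp only [map_add, map_sub, map_mul, hπC]
      rw [hc]; ring
  by_cases hs : a ^ 2 + b ^ 2 = 0
  · left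
    have hII : algebraMap ℂ K Complex.I * algebraMap ℂ K Complex.I = -1 := by
      rw [← map_mul, Complex.I_mul_I]; simp
    have : (algebraMap ℂ K 1 * a + algebraMap ℂ K Complex.I * b) *
        (algebraMap ℂ K 1 * a + algebraMap ℂ K (-Complex.I) * b) = 0 := by
      rw [map_one, map_neg]
      linear_combination hs - b ^ 2 * hII
    rcases mul_eq_zero.1 this with h | h
    · exact hline _ _ (by simp) h
    · exact hline _ _ (by simp) h
  by_cases hI : I = 0
  · left
    by_cases hb : b = 0
    · exact hline 0 1 (by simp) (by simp [hb])
    · obtain ⟨c, hc⟩ := hconst (a / b) (by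
        rw [Derivation.leibniz_div, hDa, hDb]
        simp only [smul_eq_mul]
        rw [mul_eq_zero]; right
        linear_combination -hI + hi)
      refine hline 1 (-c) (by simp) ?_
      rw [map_neg, ← hc, map_one]
      field_simp
      ring
  · right
    have hDu : D ((a ^ 2 + b ^ 2) / I) =
        -((a ^ 2 - b ^ 2) * pxy - a * b * (pxx - pyy)) / I := by
      rw [Derivation.leibniz_div]
      simp only [map_add, Derivation.leibniz_pow, hDa, hDb, smul_eq_mul, nsmul_eq_mul]
      field_simp
      push_cast
      linear_combination -hV
    obtain ⟨ca, hca⟩ := hconst (π (X 0) - a * ((a ^ 2 + b ^ 2) / I)) (by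
      rw [map_sub, Derivation.leibniz, hDu, hDa, hx]
      simp only [smul_eq_mul]
      field_simp
      rw [hi]
      ring)
    obtain ⟨cb, hcb⟩ := hconst (π (X 1) - b * ((a ^ 2 + b ^ 2) / I)) (by
      rw [map_sub, Derivation.leibniz, hDu, hDb, hy]
      simp only [smul_eq_mul]
      field_simp
      rw [hi]
      ring)
    obtain ⟨c, hc⟩ := hconst ((π (X 0) - algebraMap ℂ K ca) ^ 2 + (π (X 1) - algebraMap ℂ K cb) ^ 2) (by
      simp only [map_add, map_sub, Derivation.leibniz_pow, hDC, hx, hy, smul_eq_mul, nsmul_eq_mul]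
      rw [← hca, ← hcb]
      push_cast
      ring)
    refine ⟨ca, cb, c, ?_⟩
    rw [← h0]
    simp only [map_add, map_sub, map_pow, hπC]
    rw [hc]; ring

lemma deg_one (p : MvPolynomial (Fin 2) ℂ) (hd : p.totalDegree ≤ 1) (h0 : constantCoeff p = 0) :
    p = C (coeff (Finsupp.single 0 1) p) * X 0 + C (coeff (Finsupp.single 1 1) p) * X 1 := by
  ext m
  simp only [coeff_add, coeff_C_mul, coeff_X]
  by_cases hm : m = 0
  · subst hm
    have e0 : (Finsupp.single (0 : Fin 2) 1 : Fin 2 →₀ ℕ) ≠ 0 := by simp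
    have e1 : (Finsupp.single (1 : Fin 2) 1 : Fin 2 →₀ ℕ) ≠ 0 := by simp
    rw [if_neg e0, if_neg e1]
    simpa [constantCoeff_eq] using h0
  have e01 : (Finsupp.single (0 : Fin 2) 1 : Fin 2 →₀ ℕ) ≠ Finsupp.single 1 1 := by
    intro h; have := DFunLike.congr_fun h 0; simp at this
  by_cases hm0 : m = Finsupp.single 0 1
  · subst hm0; rw [if_pos rfl, if_neg e01.symm]; ring
  by_cases hm1 : m = Finsupp.single 1 1
  · subst hm1; rw [if_pos rfl, if_neg e01]; ring
  rw [if_neg (Ne.symm hm0), if_neg (Ne.symm hm1)]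
  simp only [mul_zero, add_zero]
  apply coeff_eq_zero_of_totalDegree_lt
  refine lt_of_le_of_lt hd ?_
  by_contra hlt
  push Not at hlt
  have hdeg : m 0 + m 1 ≤ 1 := by
    have : ∑ i ∈ m.support, m i = m 0 + m 1 := by
      rw [← Fin.sum_univ_two]
      exact Finset.sum_subset (Finset.subset_univ _) (by intro i _ hi; simpa using hi)
    omega
  have h3 : m 0 ≠ 0 ∨ m 1 ≠ 0 := by
    by_contra hcon
    push Not at hcon
    exact hm (by ext i; fin_cases i <;> simp [hcon.1, hcon.2])
  rcases h3 with h | h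
  · exact hm0 (by ext i; fin_cases i <;> simp <;> omega)
  · exact hm1 (by ext i; fin_cases i <;> simp <;> omega)

theorem core2 (p : MvPolynomial (Fin 2) ℂ) (hp : Irreducible p) (hv : p ∣ vert p)
    (h0 : constantCoeff p = 0) :
    (∃ a b : ℂ, (a, b) ≠ (0, 0) ∧ (C a * X 0 + C b * X 1) ∣ p) ∨
    (∃ a b c : ℂ, a ^ 2 + b ^ 2 = c ^ 2 ∧
      ((X 0 - C a) ^ 2 + (X 1 - C b) ^ 2 - C c ^ 2) ∣ p) := by
  have hl : p.totalDegree ≤ 1 → ∃ a b : ℂ, (a, b) ≠ (0, 0) ∧ (C a * X 0 + C b * X 1) ∣ p := by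
    intro hd
    have := deg_one p hd h0
    refine ⟨_, _, ?_, dvd_of_eq this.symm⟩
    intro h
    rw [Prod.mk.injEq] at h
    rw [h.1, h.2] at this
    exact hp.ne_zero (by simpa using this)
  have hX : ∀ (i : Fin 2) (a : ℂ), (X i - C a : MvPolynomial (Fin 2) ℂ).totalDegree ≤ 1 := by
    intro i a
    refine (totalDegree_sub_C_le _ _).trans ?_
    simp
  rcases core p hp hv with ⟨a, b, c, hne, hd⟩ | ⟨a, b, c, hd⟩
  · left
    apply hl
    have hne' : C a * X 0 + C b * X 1 - C c ≠ (0 : MvPolynomial (Fin 2) ℂ) := by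
      intro h
      apply hne
      have h1 := congrArg dx h
      have h2 := congrArg dy h
      simp only [dx_mul, dy_mul, dx_add, dy_add, dx_sub, dy_sub, dx_C, dy_C, dx_X0, dx_X1, dy_X0,
        dy_X1, dx_0, dy_0, zero_mul, mul_one, mul_zero, zero_add, add_zero, sub_zero,
        C_eq_zero] at h1 h2
      rw [h1, h2]
    refine (totalDegree_le_of_dvd_of_isDomain hd hne').trans ?_
    refine (totalDegree_sub_C_le _ _).trans ((totalDegree_add _ _).trans (max_le ?_ ?_))
    · exact (totalDegree_mul _ _).trans (by simp)
    · exact (totalDegree_mul _ _).trans (by simp)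
  · have hc : a ^ 2 + b ^ 2 = c := by
      obtain ⟨q, hq⟩ := hd
      have := congrArg constantCoeff hq
      simp [h0] at this
      linear_combination this
    obtain ⟨c', hc''⟩ := IsAlgClosed.exists_pow_nat_eq c (n := 2) (by norm_num)
    have hc' := hc''.symm
    have hne : (X 0 - C a) ^ 2 + (X 1 - C b) ^ 2 - C c ≠ (0 : MvPolynomial (Fin 2) ℂ) := by
      intro h
      have h1 := congrArg dx (congrArg dx h)
      simp only [pow_succ, pow_zero, dx_mul, dx_add, dx_sub, dx_C, dx_X0, dx_X1,
        dx_0, dx_1] at h1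
      have := congrArg constantCoeff h1
      simp at this
    have hdeg : ((X 0 - C a) ^ 2 + (X 1 - C b) ^ 2 - C c : MvPolynomial (Fin 2) ℂ).totalDegree ≤ 2 := by
      refine (totalDegree_sub_C_le _ _).trans ((totalDegree_add _ _).trans (max_le ?_ ?_))
      · exact (totalDegree_pow _ _).trans (by have := hX 0 a; omega)
      · exact (totalDegree_pow _ _).trans (by have := hX 1 b; omega)
    obtain ⟨q, hq⟩ := hd
    have hq0 : q ≠ 0 := by rintro rfl; exact hne (by simpa using hq)
    have hadd := totalDegree_mul_of_isDomain hp.ne_zero hq0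
    rw [← hq] at hadd
    by_cases hqd : q.totalDegree = 0
    · right
      refine ⟨a, b, c', by rw [hc, hc'], ?_⟩
      rw [← C_pow, ← hc', hq]
      rw [totalDegree_eq_zero_iff_eq_C] at hqd
      have hu : IsUnit q := by
        rw [hqd]
        refine (isUnit_iff_ne_zero.2 ?_).map C
        intro h; rw [h, C_0] at hqd; exact hq0 hqd
      exact (hu.mul_right_dvd).2 dvd_rfl
    · left; apply hl; omega

lemma pow_mem_of_aeval (I : Ideal (MvPowerSeries (Fin 2) ℂ)) (i : Fin 2) (q : Polynomial ℂ)
    (hq : q ≠ 0) (h : Polynomial.aeval (MvPowerSeries.X i : MvPowerSeries (Fin 2) ℂ) q ∈ I) :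
    ∃ k, (MvPowerSeries.X i : MvPowerSeries (Fin 2) ℂ) ^ k ∈ I := by
  obtain ⟨k, r, hr, hnd⟩ : ∃ (k : ℕ) (r : Polynomial ℂ),
      q = Polynomial.X ^ k * r ∧ ¬ Polynomial.X ∣ r := by
    obtain ⟨r, hr, hnd⟩ := Polynomial.exists_eq_pow_rootMultiplicity_mul_and_not_dvd q hq 0
    rw [Polynomial.C_0, sub_zero] at hr hnd
    exact ⟨_, r, hr, hnd⟩
  have hu : IsUnit (Polynomial.aeval (MvPowerSeries.X i : MvPowerSeries (Fin 2) ℂ) r) := by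
    rw [MvPowerSeries.isUnit_iff_constantCoeff, isUnit_iff_ne_zero]
    rw [Polynomial.X_dvd_iff] at hnd
    intro h0
    apply hnd
    rw [Polynomial.aeval_def, Polynomial.hom_eval₂, MvPowerSeries.constantCoeff_X] at h0
    rw [Polynomial.eval₂_at_zero] at h0
    rw [RingHom.comp_apply, MvPowerSeries.algebraMap_apply, MvPowerSeries.constantCoeff_C] at h0
    exact h0
  refine ⟨k, (Ideal.mul_unit_mem_iff_mem I hu).1 ?_⟩
  rw [hr, map_mul, map_pow, Polynomial.aeval_X] at h
  exact h

lemma pow_mem_of_finite (I : Ideal (MvPowerSeries (Fin 2) ℂ)) (i : Fin 2)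
    [FiniteDimensional ℂ (MvPowerSeries (Fin 2) ℂ ⧸ I)] :
    ∃ k, (MvPowerSeries.X i : MvPowerSeries (Fin 2) ℂ) ^ k ∈ I := by
  have hint : IsIntegral ℂ (Ideal.Quotient.mkₐ ℂ I (MvPowerSeries.X i)) := IsIntegral.of_finite ℂ _
  refine pow_mem_of_aeval I i (minpoly ℂ _) (minpoly.ne_zero hint) ?_
  rw [← Ideal.Quotient.eq_zero_iff_mem, ← Ideal.Quotient.mkₐ_eq_mk ℂ, ← Polynomial.aeval_algHom_apply]
  exact minpoly.aeval ℂ _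

lemma constCoeff_ne_of_dvd (p : MvPowerSeries (Fin 2) ℂ) (k l : ℕ)
    (h0 : p ∣ MvPowerSeries.X 0 ^ k) (h1 : p ∣ MvPowerSeries.X 1 ^ l) :
    MvPowerSeries.constantCoeff p ≠ 0 := by
  have hord : ∀ (i : Fin 2) (k : ℕ),
      MvPowerSeries.lexOrder (MvPowerSeries.X i ^ k : MvPowerSeries (Fin 2) ℂ) =
        toLex (Finsupp.single i k) := by
    intro i k
    have hne : (MvPowerSeries.X i ^ k : MvPowerSeries (Fin 2) ℂ) ≠ 0 := by
      intro h
      have := congrArg (MvPowerSeries.coeff (Finsupp.single i k)) h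
      simp [MvPowerSeries.coeff_X_pow] at this
    obtain ⟨d, hd⟩ := MvPowerSeries.exists_finsupp_eq_lexOrder_of_ne_zero hne
    have := MvPowerSeries.coeff_ne_zero_of_lexOrder hd.symm
    rw [MvPowerSeries.coeff_X_pow] at this
    have e : d = Finsupp.single i k := by
      by_contra hcon
      exact this (if_neg hcon)
    rw [hd, e]
  have hp : p ≠ 0 := by
    rintro rfl
    have e := zero_dvd_iff.1 h0
    have := hord 0 k
    rw [e] at this
    simp at this
  obtain ⟨d, hd⟩ := MvPowerSeries.exists_finsupp_eq_lexOrder_of_ne_zero hp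
  have key : ∀ (i : Fin 2) (k : ℕ), p ∣ MvPowerSeries.X i ^ k → ∀ j, j ≠ i → d j = 0 := by
    intro i k hdvd j hj
    obtain ⟨q, hq⟩ := hdvd
    have h := hord i k
    rw [hq, MvPowerSeries.lexOrder_mul, hd] at h
    have hq0 : q ≠ 0 := by
      rintro rfl
      simp at h
    obtain ⟨e, he⟩ := MvPowerSeries.exists_finsupp_eq_lexOrder_of_ne_zero hq0
    rw [he, ← WithTop.coe_add, WithTop.coe_inj, ← toLex_add, toLex_inj] at h
    have := DFunLike.congr_fun h j
    simp [Finsupp.single_apply, hj.symm] at this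
    exact this.1
  have hd0 : d = 0 := by
    ext j
    fin_cases j
    · exact key 1 l h1 0 (by decide)
    · exact key 0 k h0 1 (by decide)
  have := MvPowerSeries.coeff_ne_zero_of_lexOrder hd.symm
  rw [hd0] at this
  simpa using this

lemma finite_of_pow_mem (I : Ideal (MvPowerSeries (Fin 2) ℂ)) (k l : ℕ)
    (h0 : MvPowerSeries.X 0 ^ k ∈ I) (h1 : MvPowerSeries.X 1 ^ l ∈ I) :
    FiniteDimensional ℂ (MvPowerSeries (Fin 2) ℂ ⧸ I) := by
  let φ : MvPowerSeries (Fin 2) ℂ →ₗ[ℂ] (Fin k × Fin l → ℂ) :=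
    LinearMap.pi fun ij => MvPowerSeries.coeff
      (Finsupp.single 0 (ij.1 : ℕ) + Finsupp.single 1 (ij.2 : ℕ))
  have hker : ∀ a, φ a = 0 → a ∈ I := by
    intro a ha
    let b : MvPowerSeries (Fin 2) ℂ := fun n => if k ≤ n 0 then MvPowerSeries.coeff n a else 0
    have hb : MvPowerSeries.X 0 ^ k ∣ b := by
      rw [MvPowerSeries.X_pow_dvd_iff]
      intro m hm
      exact if_neg (by omega)
    have hc : MvPowerSeries.X 1 ^ l ∣ a - b := by
      rw [MvPowerSeries.X_pow_dvd_iff]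
      intro m hm
      rw [map_sub]
      have hbm : MvPowerSeries.coeff m b = if k ≤ m 0 then MvPowerSeries.coeff m a else 0 := rfl
      rw [hbm]
      split_ifs with hk
      · simp
      · have := congrFun ha (⟨m 0, by omega⟩, ⟨m 1, hm⟩)
        have e : (Finsupp.single 0 (m 0) + Finsupp.single 1 (m 1) : Fin 2 →₀ ℕ) = m := by
          ext i; fin_cases i <;> simp
        simp only [φ, LinearMap.pi_apply, e, Pi.zero_apply] at this
        rw [this, sub_zero]
    have := I.add_mem (I.mem_of_dvd hb h0) (I.mem_of_dvd hc h1)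
    simpa using this
  let ψ : MvPowerSeries (Fin 2) ℂ →ₗ[ℂ] (MvPowerSeries (Fin 2) ℂ ⧸ I) :=
    (Ideal.Quotient.mkₐ ℂ I).toLinearMap
  have hle : LinearMap.ker φ ≤ LinearMap.ker ψ := by
    intro a ha
    exact Ideal.Quotient.eq_zero_iff_mem.2 (hker a ha)
  have : FiniteDimensional ℂ (MvPowerSeries (Fin 2) ℂ ⧸ LinearMap.ker φ) :=
    Module.Finite.equiv φ.quotKerEquivRange.symm
  refine Module.Finite.of_surjective ((LinearMap.ker φ).liftQ ψ hle) ?_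
  intro y
  obtain ⟨a, rfl⟩ := Ideal.Quotient.mkₐ_surjective ℂ I y
  exact ⟨Submodule.Quotient.mk a, rfl⟩

lemma elim_exists (p g : MvPolynomial (Fin 2) ℂ) (hp : Irreducible p) (hg : ¬ p ∣ g) (i : Fin 2) :
    ∃ q : Polynomial ℂ, q ≠ 0 ∧
      ∃ h : MvPolynomial (Fin 2) ℂ,
        p ∣ Polynomial.aeval (X i : MvPolynomial (Fin 2) ℂ) q + g * h := by
  obtain ⟨K, _, _, π, D, hπ, htr, hD⟩ := exists_K p hp
  by_cases halg : IsAlgebraic ℂ (π (X i))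
  · obtain ⟨q, hq, h⟩ := halg
    refine ⟨q, hq, 0, ?_⟩
    rw [mul_zero, add_zero, ← hπ, ← Polynomial.aeval_algHom_apply]
    exact h
  have hind : AlgebraicIndependent ℂ (fun _ : Unit => π (X i)) := by
    rw [algebraicIndependent_unique_type_iff]
    exact halg
  have hb := hind.isTranscendenceBasis_of_trdeg_le_of_finite (by simpa using htr)
  have hA := hb.isAlgebraic
  have hS : ∀ c ∈ Algebra.adjoin ℂ (Set.range (fun _ : Unit => π (X i))),
      ∃ q : Polynomial ℂ, c = Polynomial.aeval (π (X i)) q := by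
    intro c hc
    rw [Set.range_const, Algebra.adjoin_singleton_eq_range_aeval] at hc
    obtain ⟨q, hq⟩ := hc
    exact ⟨q, hq.symm⟩
  have hg0 : π g ≠ 0 := fun h => hg ((hπ g).1 h)
  obtain ⟨P, hP0, hP⟩ := (hA.isAlgebraic (π g)).exists_nonzero_coeff_and_aeval_eq_zero
    (mem_nonZeroDivisors_of_ne_zero hg0)
  obtain ⟨q, hq⟩ := hS _ (P.coeff 0).2
  have hr : ∀ Q : Polynomial (Algebra.adjoin ℂ (Set.range (fun _ : Unit => π (X i)))),
      ∃ h, Polynomial.aeval (π g) Q = π h := by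
    intro Q
    induction Q using Polynomial.induction_on' with
    | add a b ha hb =>
      obtain ⟨x, hx⟩ := ha
      obtain ⟨y, hy⟩ := hb
      exact ⟨x + y, by rw [map_add, map_add, hx, hy]⟩
    | monomial n a =>
      obtain ⟨s, hs⟩ := hS _ a.2
      refine ⟨Polynomial.aeval (X i) s * g ^ n, ?_⟩
      rw [Polynomial.aeval_monomial, map_mul, map_pow, ← Polynomial.aeval_algHom_apply, ← hs]
      rfl
  obtain ⟨h, hh⟩ := hr P.divX
  refine ⟨q, ?_, h, ?_⟩
  · rintro rfl
    apply hP0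
    ext
    rw [hq]
    simp
  · rw [← hπ, map_add, map_mul, ← Polynomial.aeval_algHom_apply, ← hq, ← hh]
    have e := congrArg (Polynomial.aeval (π g)) (Polynomial.divX_mul_X_add P)
    rw [hP, map_add, map_mul, Polynomial.aeval_X, Polynomial.aeval_C] at e
    rw [← e, add_comm, mul_comm]
    rfl

lemma ι_X (i : Fin 2) : ι (X i) = MvPowerSeries.X i := by
  simp [ι]

lemma ι_aeval (i : Fin 2) (q : Polynomial ℂ) :
    ι (Polynomial.aeval (X i : MvPolynomial (Fin 2) ℂ) q) =
      Polynomial.aeval (MvPowerSeries.X i : MvPowerSeries (Fin 2) ℂ) q := by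
  rw [Polynomial.aeval_def, Polynomial.hom_eval₂, ι_X, Polynomial.aeval_def]
  congr 1
  ext1 c
  simp [ι, MvPolynomial.algebraMap_eq, MvPowerSeries.algebraMap_apply]

lemma ι_const (p : MvPolynomial (Fin 2) ℂ) :
    MvPowerSeries.constantCoeff (ι p) = constantCoeff p := by
  rw [← MvPowerSeries.coeff_zero_eq_constantCoeff_apply]
  simp [ι, MvPolynomial.constantCoeff_eq]

lemma pow_mem_span (f g : MvPolynomial (Fin 2) ℂ) (i : Fin 2) (hf : f ≠ 0)
    (H : ∀ p, Irreducible p → p ∣ f → constantCoeff p = 0 → ¬ p ∣ g) :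
    ∃ k, (MvPowerSeries.X i : MvPowerSeries (Fin 2) ℂ) ^ k ∈ Ideal.span {ι f, ι g} := by
  induction f using UniqueFactorizationMonoid.induction_on_prime with
  | h₁ => exact absurd rfl hf
  | h₂ u hu =>
    refine ⟨0, ?_⟩
    have : Ideal.span {ι u, ι g} = ⊤ :=
      Ideal.eq_top_of_isUnit_mem _ (Ideal.subset_span (by simp)) (hu.map ι)
    rw [this]
    trivial
  | h₃ a p ha hp ih =>
    obtain ⟨k, hk⟩ := ih ha fun r hr hra => H r hr (hra.mul_left p)
    obtain ⟨l, hl⟩ : ∃ l, (MvPowerSeries.X i : MvPowerSeries (Fin 2) ℂ) ^ l ∈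
        Ideal.span {ι p, ι g} := by
      by_cases hc : constantCoeff p = 0
      · obtain ⟨q, hq, h, hh⟩ := elim_exists p g hp.irreducible
          (H p hp.irreducible (dvd_mul_right p a) hc) i
        refine pow_mem_of_aeval _ i q hq ?_
        obtain ⟨r, hr⟩ := hh
        rw [← ι_aeval, Ideal.mem_span_pair]
        refine ⟨ι r, ι (-h), ?_⟩
        rw [← map_mul, ← map_mul, ← map_add]
        congr 1
        linear_combination -hr
      · refine ⟨0, ?_⟩
        have hu : IsUnit (ι p) := by
          rw [MvPowerSeries.isUnit_iff_constantCoeff, ι_const]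
          exact isUnit_iff_ne_zero.2 hc
        have : Ideal.span {ι p, ι g} = ⊤ :=
          Ideal.eq_top_of_isUnit_mem _ (Ideal.subset_span (by simp)) hu
        rw [this]
        trivial
    rw [Ideal.mem_span_pair] at hk hl
    obtain ⟨x, y, hxy⟩ := hk
    obtain ⟨z, w, hzw⟩ := hl
    refine ⟨k + l, ?_⟩
    rw [Ideal.mem_span_pair]
    refine ⟨x * z, x * ι a * w + y * (z * ι p + w * ι g), ?_⟩
    rw [pow_add, ← hxy, ← hzw, map_mul]
    ring

lemma not_finite_of_dvd (f L : MvPolynomial (Fin 2) ℂ) (hL : L ∣ f)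
    (h0 : constantCoeff L = 0) (hv : L ∣ vert L) :
    ¬ FiniteDimensional ℂ (MvPowerSeries (Fin 2) ℂ ⧸ Ideal.span {ι f, ι (vert f)}) := by
  intro hfin
  obtain ⟨g, hg⟩ := hL
  have hvf : L ∣ vert f := by
    have h1 := vert_mul L g
    rw [← hg] at h1
    have := dvd_add h1 (hv.mul_left (g ^ 6))
    rwa [sub_add_cancel] at this
  have hle : Ideal.span {ι f, ι (vert f)} ≤ Ideal.span {ι L} := by
    rw [Ideal.span_le]
    rintro z (rfl | rfl)
    · exact Ideal.mem_span_singleton.2 (map_dvd ι ⟨g, hg⟩)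
    · exact Ideal.mem_span_singleton.2 (map_dvd ι hvf)
  obtain ⟨k, hk⟩ := pow_mem_of_finite (Ideal.span {ι f, ι (vert f)}) 0
  obtain ⟨l, hl⟩ := pow_mem_of_finite (Ideal.span {ι f, ι (vert f)}) 1
  refine constCoeff_ne_of_dvd (ι L) k l (Ideal.mem_span_singleton.1 (hle hk))
    (Ideal.mem_span_singleton.1 (hle hl)) ?_
  rw [ι_const, h0]

/-- **Theorem 3.2(7), vertex part.** For a squarefree `f`, the number of vertices
`V_f` concentrated at the origin is infinite if and only if the germ of `f = 0` at the
origin contains the germ of a line or of a complex circle through the origin, i.e.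
either some linear polynomial `a·X + b·Y`, `(a,b) ≠ (0,0)`, divides `f`, or some circle
polynomial `(X − a)² + (Y − b)² − c²` with `a² + b² = c²` divides `f`. -/
theorem vertex_number_infinite_iff_line_or_circle_component
    (f : MvPolynomial (Fin 2) ℂ) (hf : Squarefree f) :
    ¬ FiniteDimensional ℂ
        (MvPowerSeries (Fin 2) ℂ ⧸ Ideal.span {ι f, ι (vert f)}) ↔
      (∃ a b : ℂ, (a, b) ≠ (0, 0) ∧
        (MvPolynomial.C a * MvPolynomial.X 0 + MvPolynomial.C b * MvPolynomial.X 1) ∣ f) ∨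
      (∃ a b c : ℂ, a ^ 2 + b ^ 2 = c ^ 2 ∧
        ((MvPolynomial.X 0 - MvPolynomial.C a) ^ 2 +
          (MvPolynomial.X 1 - MvPolynomial.C b) ^ 2 - MvPolynomial.C c ^ 2) ∣ f) := by
  constructor
  · intro hinf
    obtain ⟨p, hp, hpf, h0, hpv⟩ : ∃ p, Irreducible p ∧ p ∣ f ∧ constantCoeff p = 0 ∧
        p ∣ vert f := by
      by_contra hcon
      push Not at hcon
      obtain ⟨k, hk⟩ := pow_mem_span f (vert f) 0 hf.ne_zero hcon
      obtain ⟨l, hl⟩ := pow_mem_span f (vert f) 1 hf.ne_zero hcon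
      exact hinf (finite_of_pow_mem _ k l hk hl)
    obtain ⟨g, hg⟩ := hpf
    have hpg : ¬ p ∣ g := by
      intro h
      exact hp.not_isUnit (hf p (hg ▸ mul_dvd_mul_left p h))
    have h1 := vert_mul p g
    rw [← hg] at h1
    have h2 : p ∣ g ^ 6 * vert p := (dvd_sub_right hpv).1 h1
    have hpp : p ∣ vert p := (hp.prime.dvd_or_dvd h2).resolve_left
      fun h => hpg (hp.prime.dvd_of_dvd_pow h)
    have hpf : p ∣ f := ⟨g, hg⟩
    rcases core2 p hp hpp h0 with ⟨a, b, hab, h⟩ | ⟨a, b, c, habc, h⟩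
    · exact Or.inl ⟨a, b, hab, h.trans hpf⟩
    · exact Or.inr ⟨a, b, c, habc, h.trans hpf⟩
  · rintro (⟨a, b, hab, h⟩ | ⟨a, b, c, habc, h⟩)
    · refine not_finite_of_dvd f _ h (by simp) ?_
      rw [vert_line]
      exact dvd_zero _
    · refine not_finite_of_dvd f _ h ?_ (vert_circle a b c)
      simp [habc]
end

section
/- Let f, g ∈ R := MvPolynomial ℂ (Fin 2) and let w₁, w₂, d : ℕ satisfy: w₁ ≥ 1, w₂ ≥ 1, gcd(w₁, w₂) = 1, w₁ ≠ w₂, d > 0; g ≠ 0 and g is quasihomogeneous of weighted degree d, i.e. every exponent α in the support of g satisfies w₁·α(0) + w₂·α(1) = d; every exponent α in the support of f − g satisfies w₁·α(0) + w₂·α(1) > d; X does not divide g and Y does not divide g in R; and g is squarefree. Then the quotient A ⧸ Ideal.span {ι f, ι(i_f)} is a finite-dimensional ℂ-vector space and w₁ · w₂ · Module.finrank ℂ (A ⧸ Ideal.span {ι f, ι(i_f)}) = d · (3d − 2w₁ − 2w₂) (an equality of natural numbers; 3d ≥ 2w₁ + 2w₂ under the hypotheses). -/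
open MvPolynomial

abbrev PR := MvPolynomial (Fin 2) ℂ
abbrev PA := MvPowerSeries (Fin 2) ℂ

/-- weight of an exponent -/
def wt (w : Fin 2 → ℕ) (α : Fin 2 →₀ ℕ) : ℤ := (w 0 : ℤ) * (α 0 : ℤ) + (w 1 : ℤ) * (α 1 : ℤ)

theorem wt_add (w : Fin 2 → ℕ) (α β : Fin 2 →₀ ℕ) : wt w (α + β) = wt w α + wt w β := by
  simp only [wt, Finsupp.add_apply]; push_cast; ring

theorem wt_nonneg (w : Fin 2 → ℕ) (α : Fin 2 →₀ ℕ) : 0 ≤ wt w α := by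
  unfold wt; positivity

theorem wt_single (w : Fin 2 → ℕ) (i : Fin 2) (n : ℕ) : wt w (Finsupp.single i n) = w i * n := by
  fin_cases i <;> simp [wt]

theorem coeff_iota (p : PR) (α : Fin 2 →₀ ℕ) :
    MvPowerSeries.coeff α (ι p) = MvPolynomial.coeff α p := by
  simp [ι]

theorem F_mul_aux (w : Fin 2 → ℕ) (m n : ℤ) (a b : PA)
    (ha : ∀ α, wt w α < m → MvPowerSeries.coeff α a = 0)
    (hb : ∀ α, wt w α < n → MvPowerSeries.coeff α b = 0) :
    ∀ α, wt w α < m + n → MvPowerSeries.coeff α (a * b) = 0 := by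
  classical
  intro α hα
  rw [MvPowerSeries.coeff_mul]
  apply Finset.sum_eq_zero
  rintro ⟨x, y⟩ hxy
  rw [Finset.HasAntidiagonal.mem_antidiagonal] at hxy
  simp only at hxy
  rw [← hxy, wt_add] at hα
  rcases lt_or_ge (wt w x) m with h | h
  · rw [ha x h, zero_mul]
  · rw [hb y (by linarith), mul_zero]

/-- weight filtration -/
def FI (w : Fin 2 → ℕ) (n : ℤ) : Ideal PA where
  carrier := {a | ∀ α, wt w α < n → MvPowerSeries.coeff α a = 0}
  add_mem' := by
    intro a b ha hb α h
    simp [ha α h, hb α h]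
  zero_mem' := by intro α _; simp
  smul_mem' := by
    intro c a ha α h
    have := F_mul_aux w 0 n c a (fun α h => absurd h (not_lt.mpr (wt_nonneg w α))) ha α (by simpa using h)
    simpa using this

theorem mem_FI {w : Fin 2 → ℕ} {n : ℤ} {a : PA} :
    a ∈ FI w n ↔ ∀ α, wt w α < n → MvPowerSeries.coeff α a = 0 := Iff.rfl

theorem FI_mul {w : Fin 2 → ℕ} {m n : ℤ} {a b : PA} (ha : a ∈ FI w m) (hb : b ∈ FI w n) :
    a * b ∈ FI w (m + n) := F_mul_aux w m n a b ha hb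

theorem FI_anti {w : Fin 2 → ℕ} {m n : ℤ} (h : m ≤ n) : FI w n ≤ FI w m :=
  fun _ ha α hα => ha α (lt_of_lt_of_le hα h)

theorem FI_nonpos {w : Fin 2 → ℕ} {n : ℤ} (h : n ≤ 0) (a : PA) : a ∈ FI w n :=
  fun α hα => absurd hα (not_lt.mpr (h.trans (wt_nonneg w α)))

/-- quasihomogeneous of weight n -/
def HQ (w : Fin 2 → ℕ) (n : ℤ) (p : PR) : Prop :=
  ∀ α, MvPolynomial.coeff α p ≠ 0 → wt w α = n

theorem HQ.mem {w : Fin 2 → ℕ} {n : ℤ} {p : PR} (h : HQ w n p) : ι p ∈ FI w n := by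
  intro α hα
  rw [coeff_iota]
  by_contra h0
  exact absurd (h α h0) hα.ne

theorem HQ.mul {w : Fin 2 → ℕ} {m n : ℤ} {p q : PR} (hp : HQ w m p) (hq : HQ w n q) :
    HQ w (m + n) (p * q) := by
  classical
  intro α hα
  rw [MvPolynomial.coeff_mul] at hα
  obtain ⟨⟨x, y⟩, hxy, h⟩ := Finset.exists_ne_zero_of_sum_ne_zero hα
  rw [Finset.HasAntidiagonal.mem_antidiagonal] at hxy
  simp only at hxy
  rw [← hxy, wt_add, hp x (left_ne_zero_of_mul h), hq y (right_ne_zero_of_mul h)]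

theorem HQ.add {w : Fin 2 → ℕ} {n : ℤ} {p q : PR} (hp : HQ w n p) (hq : HQ w n q) :
    HQ w n (p + q) := by
  intro α hα
  by_cases h : MvPolynomial.coeff α p = 0
  · apply hq; intro h'; apply hα; simp [h, h']
  · exact hp α h

theorem HQ.neg {w : Fin 2 → ℕ} {n : ℤ} {p : PR} (hp : HQ w n p) : HQ w n (-p) := by
  intro α hα
  apply hp; simpa using hα

theorem HQ.sub {w : Fin 2 → ℕ} {n : ℤ} {p q : PR} (hp : HQ w n p) (hq : HQ w n q) :
    HQ w n (p - q) := by rw [sub_eq_add_neg]; exact hp.add hq.neg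

theorem HQ.eq_zero {w : Fin 2 → ℕ} {n : ℤ} {p : PR} (hp : HQ w n p) (h : ι p ∈ FI w (n + 1)) :
    p = 0 := by
  ext α
  by_contra h0
  have := h α (by rw [hp α (by simpa using h0)]; linarith)
  rw [coeff_iota] at this
  exact h0 (by simpa using this)

/-- `p` is the leading form of weight `n` of `a` -/
def Lead (w : Fin 2 → ℕ) (n : ℤ) (a : PA) (p : PR) : Prop := HQ w n p ∧ a - ι p ∈ FI w (n + 1)

theorem Lead.mem {w : Fin 2 → ℕ} {n : ℤ} {a : PA} {p : PR} (h : Lead w n a p) : a ∈ FI w n := by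
  have := (FI w n).add_mem (FI_anti (by linarith) h.2) h.1.mem
  simpa using this

theorem Lead.mul {w : Fin 2 → ℕ} {m n : ℤ} {a b : PA} {p q : PR} (ha : Lead w m a p)
    (hb : Lead w n b q) : Lead w (m + n) (a * b) (p * q) := by
  refine ⟨ha.1.mul hb.1, ?_⟩
  have h1 := FI_mul ha.2 hb.mem
  have h2 := FI_mul ha.1.mem hb.2
  have h3 := (FI w (m + n + 1)).add_mem (FI_anti (by linarith) h1) (FI_anti (by linarith) h2)
  convert h3 using 1
  rw [map_mul]; ring

theorem Lead.add {w : Fin 2 → ℕ} {n : ℤ} {a b : PA} {p q : PR} (ha : Lead w n a p)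
    (hb : Lead w n b q) : Lead w n (a + b) (p + q) := by
  refine ⟨ha.1.add hb.1, ?_⟩
  convert (FI w (n + 1)).add_mem ha.2 hb.2 using 1
  rw [map_add]; ring

theorem Lead.sub {w : Fin 2 → ℕ} {n : ℤ} {a b : PA} {p q : PR} (ha : Lead w n a p)
    (hb : Lead w n b q) : Lead w n (a - b) (p - q) := by
  refine ⟨ha.1.sub hb.1, ?_⟩
  convert (FI w (n + 1)).sub_mem ha.2 hb.2 using 1
  rw [map_sub]; ring

theorem HQ.lead {w : Fin 2 → ℕ} {n : ℤ} {p : PR} (h : HQ w n p) : Lead w n (ι p) p :=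
  ⟨h, by simp⟩

theorem HQ_two (w : Fin 2 → ℕ) : HQ w 0 2 := by
  classical
  intro α hα
  have : (2 : PR) = C 2 := (map_ofNat C 2).symm
  rw [this, MvPolynomial.coeff_C] at hα
  have : 0 = α := by by_contra h; simp [h] at hα
  subst this
  simp [wt]

theorem Lead.pderiv {w : Fin 2 → ℕ} {n : ℤ} {f g : PR} (h : Lead w n (ι f) g) (i : Fin 2) :
    Lead w (n - w i) (ι (MvPolynomial.pderiv i f)) (MvPolynomial.pderiv i g) := by
  constructor
  · intro α hα
    rw [MvPolynomial.coeff_pderiv] at hα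
    have := h.1 _ (left_ne_zero_of_mul hα)
    rw [wt_add, wt_single] at this
    push_cast at this
    linarith
  · rw [← map_sub, ← map_sub]
    intro α hα
    rw [coeff_iota, MvPolynomial.coeff_pderiv, ← coeff_iota, map_sub]
    rw [h.2 _ (by rw [wt_add, wt_single]; push_cast; linarith), zero_mul]

theorem exists_lead {w : Fin 2 → ℕ} (hw : ∀ i, 0 < w i) {n : ℤ} {a : PA} (h : a ∈ FI w n) :
    ∃ p, Lead w n a p := by
  classical
  have hfin : {α : Fin 2 →₀ ℕ | wt w α = n}.Finite := by
    apply (Set.finite_Iic (Finsupp.equivFunOnFinite.symm (fun _ => n.toNat) : Fin 2 →₀ ℕ)).subset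
    intro α hα
    simp only [Set.mem_ofPred_eq, wt] at hα
    have h0 := hw 0
    have h1 := hw 1
    intro i
    have e0 : (α 0 : ℤ) ≤ w 0 * α 0 := by
      exact_mod_cast Nat.le_mul_of_pos_left _ h0
    have e1 : (α 1 : ℤ) ≤ w 1 * α 1 := by
      exact_mod_cast Nat.le_mul_of_pos_left _ h1
    fin_cases i <;> simp <;> omega
  let p : PR := ∑ α ∈ hfin.toFinset, MvPolynomial.monomial α (MvPowerSeries.coeff α a)
  have hp : ∀ α, MvPolynomial.coeff α p = if wt w α = n then MvPowerSeries.coeff α a else 0 := by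
    intro α
    simp [p, MvPolynomial.coeff_sum, MvPolynomial.coeff_monomial]
  refine ⟨p, ?_, ?_⟩
  · intro α hα
    rw [hp] at hα
    by_contra h'
    simp [h'] at hα
  · intro α hα
    rw [map_sub, coeff_iota, hp]
    split_ifs with h'
    · simp
    · rw [h α (by omega)]; simp

theorem lead_infl {w : Fin 2 → ℕ} {d : ℤ} {f g : PR} (h : Lead w d (ι f) g) :
    Lead w (3 * d - 2 * w 0 - 2 * w 1) (ι (infl f)) (infl g) := by
  have hx := h.pderiv 0
  have hy := h.pderiv 1
  have hxx := hx.pderiv 0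
  have hxy := hx.pderiv 1
  have hyy := hy.pderiv 1
  have h2 := (HQ_two w).lead
  have t1 := (hy.mul hy).mul hxx
  have t2 := ((h2.mul hx).mul hy).mul hxy
  have t3 := (hx.mul hx).mul hyy
  have e1 : (d - w 1) + (d - w 1) + (d - w 0 - w 0) = 3 * d - 2 * w 0 - 2 * (w 1 : ℤ) := by ring
  have e2 : 0 + (d - w 0) + (d - w 1) + (d - w 0 - w 1) = 3 * d - 2 * w 0 - 2 * (w 1 : ℤ) := by ring
  have e3 : (d - w 0) + (d - w 0) + (d - w 1 - w 1) = 3 * d - 2 * w 0 - 2 * (w 1 : ℤ) := by ring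
  rw [e1] at t1
  rw [e2] at t2
  rw [e3] at t3
  have t := (t1.sub t2).add t3
  convert t using 1
  · simp only [infl, dx, dy, map_add, map_sub, map_mul, map_pow]; ring
  · simp only [infl, dx, dy]; ring

theorem mul_mem_FI {w : Fin 2 → ℕ} (hw : ∀ i, 0 < w i) {d n : ℤ} {f a : PA} {g : PR}
    (hg : g ≠ 0) (h : Lead w d f g) (ha : a * f ∈ FI w (n + d)) : a ∈ FI w n := by
  have key : ∀ m : ℕ, (m : ℤ) ≤ n → a ∈ FI w m := by
    intro m
    induction m with
    | zero => intro _; exact FI_nonpos (by simp) a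
    | succ m ih =>
      intro hm
      push_cast at hm
      obtain ⟨p, hp⟩ := exists_lead hw (ih (by linarith))
      have hl := hp.mul h
      have h1 := (FI w (m + d + 1)).sub_mem (FI_anti (by linarith) ha) hl.2
      rw [sub_sub_cancel] at h1
      have h2 := hl.1.eq_zero h1
      have h3 : p = 0 := (mul_eq_zero.mp h2).resolve_right hg
      have := hp.2
      rw [h3] at this
      simpa using this
  rcases le_or_gt n 0 with h0 | h0
  · exact FI_nonpos h0 a
  · have := key n.toNat (by omega)
    rwa [Int.toNat_of_nonneg h0.le] at this

theorem mul_mem_sup {w : Fin 2 → ℕ} (hw : ∀ i, 0 < w i) {d e n : ℤ} {f h b : PA} {g h0 : PR}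
    (hg : g ≠ 0) (hf : Lead w d f g) (hh : Lead w e h h0) (hrel : ∀ q, g ∣ h0 * q → g ∣ q)
    (hb : b * h ∈ Ideal.span {f} ⊔ FI w (n + e)) : b ∈ Ideal.span {f} ⊔ FI w n := by
  have key : ∀ m : ℕ, (m : ℤ) ≤ n → ∃ c, b - c * f ∈ FI w m := by
    intro m
    induction m with
    | zero => intro _; exact ⟨0, FI_nonpos (by simp) _⟩
    | succ m ih =>
      intro hm
      push_cast at hm
      obtain ⟨c, hc⟩ := ih (by linarith)
      obtain ⟨p, hp⟩ := exists_lead hw hc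
      obtain ⟨s, hs, t, ht, hst⟩ := Submodule.mem_sup.mp hb
      obtain ⟨u, rfl⟩ := Ideal.mem_span_singleton'.mp hs
      have hl := hp.mul hh
      have ht' : t ∈ FI w (m + e + 1) := FI_anti (by linarith) ht
      have ha : (u - c * h) * f ∈ FI w ((m + e - d) + d) := by
        have : (u - c * h) * f = (b - c * f) * h - t := by
          linear_combination hst
        rw [this, sub_add_cancel]
        exact (FI w _).sub_mem hl.mem (FI_anti (by linarith) ht')
      obtain ⟨q, hq⟩ := exists_lead hw (mul_mem_FI hw hg hf ha)
      have hl2 := hq.mul hf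
      rw [sub_add_cancel] at hl2
      have hz : p * h0 - q * g = 0 := by
        apply (hl.sub hl2).1.eq_zero
        have h3 := (FI w (m + e + 1)).sub_mem ht' (hl.sub hl2).2
        convert h3 using 1
        linear_combination -hst
      obtain ⟨r, hr⟩ := hrel p ⟨q, by linear_combination hz⟩
      have hr' : ι r ∈ FI w (m - d) := by
        apply mul_mem_FI hw hg hf.1.lead
        rw [sub_add_cancel, ← map_mul, mul_comm, ← hr]
        exact hp.1.mem
      refine ⟨c + ι r, ?_⟩
      have h4 := FI_mul hr' hf.2
      have h5 := (FI w (m + 1)).sub_mem hp.2 (FI_anti (by linarith) h4)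
      push_cast
      convert h5 using 1
      rw [hr, map_mul]; ring
  have hmain : ∃ c, b - c * f ∈ FI w n := by
    rcases le_or_gt n 0 with h0 | h0
    · exact ⟨0, FI_nonpos h0 _⟩
    · have := key n.toNat (by omega)
      rwa [Int.toNat_of_nonneg h0.le] at this
  obtain ⟨c, hc⟩ := hmain
  rw [← sub_add_cancel b (c * f), add_comm]
  exact Submodule.add_mem_sup (Ideal.mem_span_singleton'.mpr ⟨c, rfl⟩) hc

theorem pderiv_comm' (f : PR) : pderiv 0 (pderiv 1 f) = pderiv 1 (pderiv 0 f) := by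
  ext α
  simp only [MvPolynomial.coeff_pderiv]
  rw [add_right_comm]
  simp
  ring

theorem euler (w : Fin 2 → ℕ) (d : ℕ) (g : PR) (hg : HQ w d g) :
    (w 0 : PR) * X 0 * pderiv 0 g + (w 1 : PR) * X 1 * pderiv 1 g = (d : PR) * g := by
  have h : MvPolynomial.IsWeightedHomogeneous w g d := by
    intro α hα
    have := hg α hα
    unfold wt at this
    rw [Finsupp.weight_apply, Finsupp.sum_fintype _ _ (by simp)]
    simp
    zify
    linarith
  have := h.sum_weight_X_mul_pderiv
  simp [nsmul_eq_mul, Fin.sum_univ_two] at this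
  linear_combination this

theorem prime_dvd_pderiv (p : PR) (hp : Prime p) (i : Fin 2) (h : p ∣ pderiv i p) :
    pderiv i p = 0 := by
  by_contra h0
  obtain ⟨q, hq⟩ := h
  have hq0 : q ≠ 0 := by rintro rfl; simp at hq; exact h0 hq
  have h1 := MvPolynomial.totalDegree_mul_of_isDomain hp.ne_zero hq0
  rw [← hq] at h1
  have h2 : (pderiv i p).totalDegree < p.totalDegree := by
    obtain ⟨β, hβ, hdeg⟩ := Finset.exists_mem_eq_sup (pderiv i p).support
      (by simpa using h0) (fun s => s.sum fun _ e => e)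
    rw [MvPolynomial.mem_support_iff, MvPolynomial.coeff_pderiv] at hβ
    have h3 := MvPolynomial.le_totalDegree (MvPolynomial.mem_support_iff.mpr (left_ne_zero_of_mul hβ))
    rw [Finsupp.sum_add_index' (by simp) (by simp)] at h3
    simp at h3
    change (pderiv i p).totalDegree = _ at hdeg
    omega
  omega

theorem prime_not_dvd_both (p : PR) (hp : Prime p) (h0 : p ∣ pderiv 0 p) (h1 : p ∣ pderiv 1 p) :
    False := by
  have e0 := prime_dvd_pderiv p hp 0 h0
  have e1 := prime_dvd_pderiv p hp 1 h1
  have hc : ∀ α : Fin 2 →₀ ℕ, α ≠ 0 → coeff α p = 0 := by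
    intro α hα
    have : ∃ i, α i ≠ 0 := by
      by_contra hcon
      push Not at hcon
      exact hα (Finsupp.ext hcon)
    obtain ⟨i, hi⟩ := this
    have hz : pderiv i p = 0 := by fin_cases i; exacts [e0, e1]
    have h2 := MvPolynomial.coeff_pderiv (i := i) p (α - Finsupp.single i 1)
    rw [hz, tsub_add_cancel_of_le (by simpa using Nat.one_le_iff_ne_zero.mpr hi)] at h2
    simp at h2
    rcases h2 with h2 | h2
    · exact h2
    · exfalso
      exact (Nat.cast_add_one_ne_zero (R := ℂ) (α i - 1)) (by exact_mod_cast h2)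
  have hC : p = C (coeff 0 p) := by
    classical
    ext α
    rw [MvPolynomial.coeff_C]
    split_ifs with h
    · rw [h]
    · exact hc α (Ne.symm h)
  apply hp.not_isUnit
  rw [hC]
  apply IsUnit.map
  rw [isUnit_iff_ne_zero]
  intro h
  rw [h] at hC
  exact hp.ne_zero (by simpa using hC)

theorem prime_not_dvd_X (p g : PR) (hp : Prime p) (hpg : p ∣ g) (i : Fin 2) (hX : ¬ X i ∣ g) :
    ¬ p ∣ X i := by
  intro h
  have hXp : Prime (X i : PR) := MvPolynomial.X_prime
  exact hX (((hp.associated_of_dvd hXp h).dvd_iff_dvd_left).mp hpg)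

theorem infl_coprime (w : Fin 2 → ℕ) (d : ℕ) (g : PR) (hw : ∀ i, 0 < w i) (hne : w 0 ≠ w 1)
    (hg : HQ w d g) (hX : ¬ X 0 ∣ g) (hY : ¬ X 1 ∣ g) (hsf : Squarefree g) (p : PR)
    (hp : Prime p) (hpg : p ∣ g) (hpi : p ∣ infl g) : False := by
  have hx := prime_not_dvd_X p g hp hpg 0 hX
  have hy := prime_not_dvd_X p g hp hpg 1 hY
  have E := euler w d g hg
  have Ex := congrArg (pderiv 0) E
  have Ey := congrArg (pderiv 1) E
  have hn : ∀ (n : ℕ) (i : Fin 2), pderiv i (n : PR) = 0 := by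
    intro n i
    have : (n : PR) = C (n : ℂ) := by simp
    rw [this, pderiv_C]
  have h01 : (pderiv 0 (X 1 : PR)) = 0 := pderiv_X_of_ne (by decide)
  have h10 : (pderiv 1 (X 0 : PR)) = 0 := pderiv_X_of_ne (by decide)
  simp only [map_add, pderiv_mul, hn, h01, h10, pderiv_X_self, pderiv_comm'] at Ex Ey
  have hcast : ∀ c : ℂ, c ≠ 0 → ¬ p ∣ C c := by
    intro c hc h
    exact hp.not_isUnit (isUnit_of_dvd_unit h ((isUnit_iff_ne_zero.mpr hc).map C))
  have hw0 : ¬ p ∣ (w 0 : PR) := by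
    have := hcast (w 0) (by exact_mod_cast (hw 0).ne')
    simpa using this
  have hw1 : ¬ p ∣ (w 1 : PR) := by
    have := hcast (w 1) (by exact_mod_cast (hw 1).ne')
    simpa using this
  have hw01 : ¬ p ∣ ((w 0 : PR) - (w 1 : PR)) := by
    have := hcast (w 0 - w 1) (sub_ne_zero.mpr (by exact_mod_cast hne))
    simpa using this
  have hpy : p ∣ pderiv 1 g := by
    have h1 : p ∣ (w 1 : PR) * ((w 0 : PR) - (w 1 : PR)) * X 1 * (pderiv 1 g) ^ 3 := by
      have key : (w 1 : PR) * ((w 0 : PR) - (w 1 : PR)) * X 1 * (pderiv 1 g) ^ 3 =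
          infl g * ((w 0 : PR) ^ 2 * (X 0 : PR) ^ 2) - g * ((pderiv 1 g) ^ 2 * ((d : PR) - (w 0 : PR)) * (d : PR)
            - 2 * (w 0 : PR) * (X 0 : PR) * (d : PR) * pderiv 1 (pderiv 0 g) * pderiv 1 g
            + (d : PR) * pderiv 1 (pderiv 1 g) * ((d : PR) * g - 2 * (w 1 : PR) * (X 1 : PR) * pderiv 1 g)) := by
        unfold infl dx dy
        linear_combination -(E * (-2 * (w 0 : PR) * (X 0 : PR) * pderiv 1 g * pderiv 1 (pderiv 0 g)
          + pderiv 1 (pderiv 1 g) * ((w 0 : PR) * (X 0 : PR) * pderiv 0 g + (d : PR) * g - (w 1 : PR) * (X 1 : PR) * pderiv 1 g))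
          + (pderiv 1 g) ^ 2 * ((w 0 : PR) * (X 0 : PR) * Ex + (w 1 : PR) * (X 1 : PR) * Ey + ((d : PR) - (w 0 : PR)) * E))
      rw [key]
      exact dvd_sub (hpi.mul_right _) (hpg.mul_right _)
    have h2 := ((hp.dvd_or_dvd h1).resolve_left (fun h => ?_))
    · exact hp.dvd_of_dvd_pow h2
    · rcases hp.dvd_or_dvd h with h | h
      · rcases hp.dvd_or_dvd h with h | h
        · exact hw1 h
        · exact hw01 h
      · exact hy h
  have hpx : p ∣ pderiv 0 g := by
    have h1 : p ∣ (w 0 : PR) * X 0 * pderiv 0 g := by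
      have : (w 0 : PR) * X 0 * pderiv 0 g = (d : PR) * g - (w 1 : PR) * X 1 * pderiv 1 g := by
        linear_combination E
      rw [this]
      exact dvd_sub (hpg.mul_left _) (hpy.mul_left _)
    refine ((hp.dvd_or_dvd h1).resolve_left (fun h => ?_))
    rcases hp.dvd_or_dvd h with h | h
    · exact hw0 h
    · exact hx h
  obtain ⟨q, rfl⟩ := hpg
  have hpq : ¬ p ∣ q := by
    intro h
    exact hp.not_isUnit (hsf p (mul_dvd_mul_left p h))
  have fin : ∀ i, p ∣ pderiv i (p * q) → p ∣ pderiv i p := by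
    intro i h
    rw [pderiv_mul] at h
    have := (dvd_add_left (dvd_mul_right p (pderiv i q))).mp h
    exact (hp.dvd_or_dvd this).resolve_right hpq
  exact prime_not_dvd_both p hp (fin 0 hpx) (fin 1 hpy)

theorem quot_count (u : PA) (P Q : Ideal PA) (h : ∀ x, x * u ∈ Q ↔ x ∈ P)
    [FiniteDimensional ℂ (PA ⧸ Q)] :
    FiniteDimensional ℂ (PA ⧸ (Ideal.span {u} ⊔ Q)) ∧
    Module.finrank ℂ (PA ⧸ P) + Module.finrank ℂ (PA ⧸ (Ideal.span {u} ⊔ Q))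
      = Module.finrank ℂ (PA ⧸ Q) := by
  let φ0 : (PA ⧸ P) →ₗ[PA] (PA ⧸ Q) := Submodule.mapQ P Q (LinearMap.mulRight PA u)
    (fun x hx => (h x).mpr hx)
  let φ : (PA ⧸ P) →ₗ[ℂ] (PA ⧸ Q) := φ0.restrictScalars ℂ
  let π : (PA ⧸ Q) →ₗ[ℂ] (PA ⧸ (Ideal.span {u} ⊔ Q)) :=
    (Ideal.Quotient.factorₐ ℂ (le_sup_right : Q ≤ Ideal.span {u} ⊔ Q)).toLinearMap
  have hφ : ∀ x : PA, φ (Ideal.Quotient.mk P x) = Ideal.Quotient.mk Q (x * u) := fun x => rfl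
  have hπ : ∀ x : PA, π (Ideal.Quotient.mk Q x) = Ideal.Quotient.mk _ x := fun x => rfl
  have hinj : Function.Injective φ := by
    rw [injective_iff_map_eq_zero]
    intro x hx
    obtain ⟨x, rfl⟩ := Ideal.Quotient.mk_surjective x
    rw [hφ, Ideal.Quotient.eq_zero_iff_mem] at hx
    rw [Ideal.Quotient.eq_zero_iff_mem]
    exact (h x).mp hx
  have hsurj : Function.Surjective π := by
    intro x
    obtain ⟨x, rfl⟩ := Ideal.Quotient.mk_surjective x
    exact ⟨_, hπ x⟩
  have hker : LinearMap.ker π = LinearMap.range φ := by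
    ext x
    obtain ⟨x, rfl⟩ := Ideal.Quotient.mk_surjective x
    rw [LinearMap.mem_ker, hπ, Ideal.Quotient.eq_zero_iff_mem, LinearMap.mem_range]
    constructor
    · intro hx
      obtain ⟨s, hs, t, ht, hst⟩ := Submodule.mem_sup.mp hx
      obtain ⟨c, rfl⟩ := Ideal.mem_span_singleton'.mp hs
      refine ⟨Ideal.Quotient.mk P c, ?_⟩
      rw [hφ, Ideal.Quotient.mk_eq_mk_iff_sub_mem]
      have : c * u - x = -t := by rw [← hst]; ring
      rw [this]
      exact Q.neg_mem ht
    · rintro ⟨y, hy⟩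
      obtain ⟨y, rfl⟩ := Ideal.Quotient.mk_surjective y
      rw [hφ, Ideal.Quotient.mk_eq_mk_iff_sub_mem] at hy
      have : x = y * u + (-(y * u - x)) := by ring
      rw [this]
      exact Submodule.add_mem_sup (Ideal.mem_span_singleton'.mpr ⟨y, rfl⟩) (Q.neg_mem hy)
  have hfd : FiniteDimensional ℂ (PA ⧸ (Ideal.span {u} ⊔ Q)) := Module.Finite.of_surjective π hsurj
  refine ⟨hfd, ?_⟩
  have h1 := LinearMap.finrank_range_add_finrank_ker π
  rw [hker, LinearMap.range_eq_top.mpr hsurj, finrank_top,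
    LinearMap.finrank_range_of_inj hinj] at h1
  omega

/-- exponents of weight less than n -/
def TT (a b n : ℕ) : Finset (ℕ × ℕ) :=
  (Finset.range n ×ˢ Finset.range n).filter (fun q => a * q.1 + b * q.2 < n)

/-- exponents of weight v -/
def RR (a b v : ℕ) : Finset (ℕ × ℕ) :=
  (Finset.range (v + 1) ×ˢ Finset.range (v + 1)).filter (fun q => a * q.1 + b * q.2 = v)

theorem mem_TT {a b n : ℕ} (ha : 0 < a) (hb : 0 < b) (q : ℕ × ℕ) :
    q ∈ TT a b n ↔ a * q.1 + b * q.2 < n := by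
  have h1 := Nat.le_mul_of_pos_left q.1 ha
  have h2 := Nat.le_mul_of_pos_left q.2 hb
  simp only [TT, Finset.mem_filter, Finset.mem_product, Finset.mem_range]
  constructor
  · exact fun h => h.2
  · intro h; refine ⟨⟨?_, ?_⟩, h⟩ <;> omega

theorem mem_RR {a b n : ℕ} (ha : 0 < a) (hb : 0 < b) (q : ℕ × ℕ) :
    q ∈ RR a b n ↔ a * q.1 + b * q.2 = n := by
  have h1 := Nat.le_mul_of_pos_left q.1 ha
  have h2 := Nat.le_mul_of_pos_left q.2 hb
  simp only [RR, Finset.mem_filter, Finset.mem_product, Finset.mem_range]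
  constructor
  · exact fun h => h.2
  · intro h; refine ⟨⟨?_, ?_⟩, h⟩ <;> omega

theorem card_TT_succ {a b : ℕ} (ha : 0 < a) (hb : 0 < b) (n : ℕ) :
    (TT a b (n + 1)).card = (TT a b n).card + (RR a b n).card := by
  rw [← Finset.card_union_of_disjoint]
  · congr 1
    ext q
    rw [Finset.mem_union, mem_TT ha hb, mem_TT ha hb, mem_RR ha hb]
    omega
  · rw [Finset.disjoint_left]
    intro q h1 h2
    rw [mem_TT ha hb] at h1
    rw [mem_RR ha hb] at h2
    omega

theorem card_RR_add {a b : ℕ} (ha : 0 < a) (hb : 0 < b) (hc : Nat.Coprime a b) (v : ℕ) :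
    (RR a b (v + a * b)).card = (RR a b v).card + 1 := by
  let x := Nat.chineseRemainder hc (v + a * b) 0
  have hx1 : (x : ℕ) ≡ v + a * b [MOD a] := x.2.1
  have hx2 : (x : ℕ) ≡ 0 [MOD b] := x.2.2
  have hx3 : (x : ℕ) < a * b := Nat.chineseRemainder_lt_mul hc _ _ ha.ne' hb.ne'
  obtain ⟨j, hj⟩ := (Nat.modEq_zero_iff_dvd.mp hx2)
  obtain ⟨i, hi⟩ := (Nat.modEq_iff_dvd' (by omega)).mp hx1
  have hja : j < a := by
    rw [hj, mul_comm] at hx3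
    exact Nat.lt_of_mul_lt_mul_right hx3
  have hij : a * i + b * j = v + a * b := by rw [← hi, ← hj]; omega
  let em : (ℕ × ℕ) ↪ (ℕ × ℕ) := ⟨fun q => (q.1, q.2 + a), by
    rintro ⟨a1, a2⟩ ⟨b1, b2⟩ h; simpa using h⟩
  have hem : ∀ q, em q = (q.1, q.2 + a) := fun _ => rfl
  have hEq : RR a b (v + a * b) = insert (i, j) ((RR a b v).map em) := by
    ext ⟨s, t⟩
    rw [mem_RR ha hb, Finset.mem_insert, Finset.mem_map]
    simp only
    constructor
    · intro h
      rcases lt_or_ge t a with hta | hta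
      · left
        have h1 : b * t ≡ b * j [MOD a] := by
          have e1 : a * s + b * t ≡ a * i + b * j [MOD a] := by rw [h, hij]
          unfold Nat.ModEq at *
          simpa [Nat.add_mod] using e1
        have h2 : t = j := Nat.ModEq.eq_of_lt_of_lt (Nat.ModEq.cancel_left_of_coprime hc h1) hta hja
        subst h2
        have h3 : a * s = a * i := by omega
        rw [Nat.eq_of_mul_eq_mul_left ha h3]
      · right
        refine ⟨(s, t - a), ?_, ?_⟩
        · rw [mem_RR ha hb]
          obtain ⟨r, rfl⟩ := Nat.exists_eq_add_of_le hta
          simp only [Nat.add_sub_cancel_left]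
          rw [mul_add, mul_comm b a] at h
          omega
        · simp [hem, Nat.sub_add_cancel hta]
    · rintro (h | ⟨⟨s', t'⟩, h, h'⟩)
      · rw [Prod.mk.injEq] at h
        rw [h.1, h.2, hij]
      · rw [mem_RR ha hb] at h
        simp only [hem, Prod.mk.injEq] at h'
        rw [← h'.1, ← h'.2, ← h]
        simp only
        ring
  rw [hEq, Finset.card_insert_of_notMem, Finset.card_map]
  intro h
  rw [Finset.mem_map] at h
  obtain ⟨⟨s, t⟩, _, h⟩ := h
  simp only [hem, Prod.mk.injEq] at h
  omega

theorem card_RR_add_mul {a b : ℕ} (ha : 0 < a) (hb : 0 < b) (hc : Nat.Coprime a b) (v k : ℕ) :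
    (RR a b (v + k * (a * b))).card = (RR a b v).card + k := by
  induction k with
  | zero => simp
  | succ k ih =>
    rw [add_mul, one_mul, ← add_assoc, card_RR_add ha hb hc, ih]; ring

theorem card_TT_add {a b : ℕ} (ha : 0 < a) (hb : 0 < b) (hc : Nat.Coprime a b) (n e k : ℕ) :
    (TT a b (n + e + k * (a * b))).card + (TT a b n).card
      = (TT a b (n + e)).card + (TT a b (n + k * (a * b))).card + e * k := by
  induction e with
  | zero => simp; ring
  | succ e ih =>
    have e1 : n + (e + 1) + k * (a * b) = (n + e + k * (a * b)) + 1 := by ring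
    rw [e1, card_TT_succ ha hb, card_RR_add_mul ha hb hc, ← add_assoc n e 1, card_TT_succ ha hb]
    rw [add_mul]
    omega

theorem quot_FI {w : Fin 2 → ℕ} (hw : ∀ i, 0 < w i) (n : ℕ) :
    FiniteDimensional ℂ (PA ⧸ FI w n) ∧
      Module.finrank ℂ (PA ⧸ FI w n) = (TT (w 0) (w 1) n).card := by
  classical
  let ex : ℕ × ℕ → (Fin 2 →₀ ℕ) := fun q => Finsupp.single 0 q.1 + Finsupp.single 1 q.2
  have ex0 : ∀ q, ex q 0 = q.1 := by intro q; simp [ex]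
  have ex1 : ∀ q, ex q 1 = q.2 := by intro q; simp [ex]
  let φ : PA →ₗ[ℂ] (TT (w 0) (w 1) n → ℂ) :=
    LinearMap.pi (fun q => MvPowerSeries.coeff (ex q.1))
  have hsurj : Function.Surjective φ := by
    intro y
    refine ⟨fun α => if h : (α 0, α 1) ∈ TT (w 0) (w 1) n then y ⟨_, h⟩ else 0, ?_⟩
    ext ⟨q, hq⟩
    change (if h : (ex q 0, ex q 1) ∈ TT (w 0) (w 1) n then y ⟨_, h⟩ else 0) = _
    simp only [ex0, ex1]
    rw [dif_pos hq]
  have hker : LinearMap.ker φ = (FI w n).restrictScalars ℂ := by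
    ext a
    rw [LinearMap.mem_ker, Submodule.restrictScalars_mem, mem_FI]
    constructor
    · intro h α hα
      have hq : (α 0, α 1) ∈ TT (w 0) (w 1) n := by
        rw [mem_TT (hw 0) (hw 1)]
        unfold wt at hα
        zify
        exact hα
      have h1 := congrFun h ⟨_, hq⟩
      have h2 : ex (α 0, α 1) = α := by
        ext i; fin_cases i
        · exact ex0 _
        · exact ex1 _
      change MvPowerSeries.coeff (ex (α 0, α 1)) a = 0 at h1
      rwa [h2] at h1
    · intro h
      ext ⟨q, hq⟩
      apply h
      rw [mem_TT (hw 0) (hw 1)] at hq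
      unfold wt
      rw [ex0, ex1]
      exact_mod_cast hq
  let E : (PA ⧸ FI w n) ≃ₗ[ℂ] (TT (w 0) (w 1) n → ℂ) :=
    (Submodule.Quotient.restrictScalarsEquiv ℂ (FI w n)).symm ≪≫ₗ
      (Submodule.quotEquivOfEq _ _ hker.symm) ≪≫ₗ φ.quotKerEquivOfSurjective hsurj
  refine ⟨Module.Finite.equiv E.symm, ?_⟩
  rw [E.finrank_eq]
  simp

theorem finrank_eq_imp {I J : Ideal PA} (h : I ≤ J) [FiniteDimensional ℂ (PA ⧸ I)]
    (he : Module.finrank ℂ (PA ⧸ I) = Module.finrank ℂ (PA ⧸ J)) : J ≤ I := by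
  let π : (PA ⧸ I) →ₗ[ℂ] (PA ⧸ J) := (Ideal.Quotient.factorₐ ℂ h).toLinearMap
  have hπ : ∀ x : PA, π (Ideal.Quotient.mk I x) = Ideal.Quotient.mk _ x := fun x => rfl
  have hsurj : Function.Surjective π := by
    intro x
    obtain ⟨x, rfl⟩ := Ideal.Quotient.mk_surjective x
    exact ⟨_, hπ x⟩
  have : FiniteDimensional ℂ (PA ⧸ J) := Module.Finite.of_surjective π hsurj
  have hinj := (LinearMap.injective_iff_surjective_of_finrank_eq_finrank he).mpr hsurj
  intro x hx
  rw [← Ideal.Quotient.eq_zero_iff_mem]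
  apply hinj
  rw [hπ, map_zero, Ideal.Quotient.eq_zero_iff_mem]
  exact hx

theorem FI_le_of_le {w : Fin 2 → ℕ} (hw : ∀ i, 0 < w i) (I : Ideal PA) (s : ℕ)
    (h : ∀ n : ℕ, FI w s ≤ I ⊔ FI w ((n + s : ℕ) : ℤ)) : FI w s ≤ I := by
  have hXm : ∀ i : Fin 2, (MvPowerSeries.X i : PA) ∈ IsLocalRing.maximalIdeal PA := by
    intro i
    rw [IsLocalRing.mem_maximalIdeal, mem_nonunits_iff, MvPowerSeries.isUnit_iff_constantCoeff]
    simp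
  let J : Ideal PA := Ideal.span {MvPowerSeries.X 0 ^ s, MvPowerSeries.X 1 ^ s}
  have hJs : J ≤ FI w s := by
    have hx : ∀ i : Fin 2, (MvPowerSeries.X i : PA) ^ s ∈ FI w s := by
      intro i α hα
      rw [MvPowerSeries.coeff_X_pow, if_neg]
      rintro rfl
      rw [wt_single] at hα
      have := Nat.le_mul_of_pos_left s (hw i)
      zify at this
      linarith
    rw [Ideal.span_le]
    rintro x (rfl | rfl)
    · exact hx 0
    · exact hx 1
  let N := (w 0 + w 1) * (s + 1)
  have hN : FI w ((N + s : ℕ) : ℤ) ≤ IsLocalRing.maximalIdeal PA • J := by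
    intro a ha
    let b : PA := fun α => if α 0 < s + 1 then 0 else MvPowerSeries.coeff α a
    have hb : (MvPowerSeries.X 0 : PA) ^ (s + 1) ∣ b := by
      rw [MvPowerSeries.X_pow_dvd_iff]
      intro m hm
      change (if m 0 < s + 1 then 0 else MvPowerSeries.coeff m a) = 0
      rw [if_pos hm]
    have hab : (MvPowerSeries.X 1 : PA) ^ (s + 1) ∣ a - b := by
      rw [MvPowerSeries.X_pow_dvd_iff]
      intro m hm
      rw [map_sub]
      change _ - (if m 0 < s + 1 then 0 else MvPowerSeries.coeff m a) = 0
      split_ifs with h0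
      · rw [ha m, sub_zero]
        unfold wt
        have h1 : w 0 * m 0 ≤ w 0 * (s + 1) := Nat.mul_le_mul_left _ h0.le
        have h2 : w 1 * m 1 < w 1 * (s + 1) := Nat.mul_lt_mul_of_pos_left hm (hw 1)
        have h3 : w 0 * m 0 + w 1 * m 1 < N + s := by
          simp only [N, add_mul]; omega
        exact_mod_cast h3
      · exact sub_self _
    have hgen : ∀ i : Fin 2, (MvPowerSeries.X i : PA) ^ s ∈ J → ∀ c, (MvPowerSeries.X i : PA) ^ (s + 1) ∣ c →
        c ∈ IsLocalRing.maximalIdeal PA • J := by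
      rintro i hi c ⟨t, rfl⟩
      rw [pow_succ', mul_assoc]
      exact Submodule.smul_mem_smul (hXm i) (J.mul_mem_right _ hi)
    have := Submodule.add_mem _ (hgen 0 (Ideal.subset_span (by simp)) b hb)
      (hgen 1 (Ideal.subset_span (by simp)) (a - b) hab)
    simpa using this
  have hJI : J ≤ I := by
    apply Submodule.le_of_le_smul_of_le_jacobson_bot (I := IsLocalRing.maximalIdeal PA)
    · exact Submodule.fg_span (Set.toFinite _)
    · rw [IsLocalRing.jacobson_eq_maximalIdeal _ bot_ne_top]
    · exact hJs.trans ((h N).trans (sup_le_sup_left hN I))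
  refine (h N).trans (sup_le le_rfl (hN.trans (le_trans ?_ hJI)))
  exact Submodule.smul_le_right

/-- **Proposition 4.6.** Let `f` be semi-quasihomogeneous with quasihomogeneous part
`g` of weighted degree `d` with respect to coprime weights `w₁ ≠ w₂` (both `≥ 1`),
where `g` is squarefree, not divisible by `X` nor by `Y`, and every term of `f − g`
has weight `> d`. Then `I_f` is finite and `I_f = d(3d − 2w₁ − 2w₂)/(w₁w₂)`. -/
theorem inflection_number_semiquasihomogeneous
    (f g : MvPolynomial (Fin 2) ℂ) (w₁ w₂ d : ℕ)
    (hw₁ : 1 ≤ w₁) (hw₂ : 1 ≤ w₂) (hcop : Nat.gcd w₁ w₂ = 1) (hw : w₁ ≠ w₂) (hd : 0 < d)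
    (hg0 : g ≠ 0)
    (hgqh : ∀ α ∈ g.support, w₁ * α 0 + w₂ * α 1 = d)
    (hfg : ∀ α ∈ (f - g).support, w₁ * α 0 + w₂ * α 1 > d)
    (hX : ¬ (MvPolynomial.X 0 : MvPolynomial (Fin 2) ℂ) ∣ g)
    (hY : ¬ (MvPolynomial.X 1 : MvPolynomial (Fin 2) ℂ) ∣ g)
    (hsf : Squarefree g) :
    FiniteDimensional ℂ
        (MvPowerSeries (Fin 2) ℂ ⧸ Ideal.span {ι f, ι (infl f)}) ∧
    w₁ * w₂ * Module.finrank ℂ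
        (MvPowerSeries (Fin 2) ℂ ⧸ Ideal.span {ι f, ι (infl f)})
      = d * (3 * d - 2 * w₁ - 2 * w₂) := by
  classical
  let w : Fin 2 → ℕ := ![w₁, w₂]
  have hw' : ∀ i, 0 < w i := by
    intro i; fin_cases i
    · exact hw₁
    · exact hw₂
  have hwt : ∀ α, wt w α = ((w₁ * α 0 + w₂ * α 1 : ℕ) : ℤ) := by
    intro α; simp [wt, w]
  have hgH : HQ w d g := by
    intro α hα
    rw [hwt, hgqh α (MvPolynomial.mem_support_iff.mpr hα)]
  have hfL : Lead w d (ι f) g := by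
    refine ⟨hgH, ?_⟩
    intro α hα
    rw [← map_sub, coeff_iota]
    by_contra h0
    have := hfg α (MvPolynomial.mem_support_iff.mpr h0)
    rw [hwt] at hα
    omega
  -- divisibility
  have hdvd : ∀ i : Fin 2, ¬ (X i : PR) ∣ g → ∃ α ∈ g.support, α i = 0 := by
    intro i hi
    by_contra hcon
    push Not at hcon
    apply hi
    rw [MvPolynomial.as_sum g]
    apply Finset.dvd_sum
    intro α hα
    rw [MvPolynomial.X_dvd_monomial]
    right
    exact hcon α hα
  have hd1 : w₁ ∣ d := by
    obtain ⟨α, hα, h0⟩ := hdvd 1 hY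
    have := hgqh α hα
    rw [h0] at this
    exact ⟨α 0, by simpa using this.symm⟩
  have hd2 : w₂ ∣ d := by
    obtain ⟨α, hα, h0⟩ := hdvd 0 hX
    have := hgqh α hα
    rw [h0] at this
    exact ⟨α 1, by simpa using this.symm⟩
  have hcop' : Nat.Coprime w₁ w₂ := hcop
  obtain ⟨k, hk⟩ := hcop'.mul_dvd_of_dvd_of_dvd hd1 hd2
  have hkpos : 0 < k := by
    rcases Nat.eq_zero_or_pos k with h | h
    · subst h; simp at hk; omega
    · exact h
  have hge : 2 * w₁ + 2 * w₂ ≤ 3 * d := by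
    have h1 : w₁ * w₂ ≤ d := by rw [hk]; exact Nat.le_mul_of_pos_right _ hkpos
    have h2 : 2 * w₁ + 2 * w₂ ≤ 3 * (w₁ * w₂) := by
      rcases lt_or_gt_of_ne hw with h | h
      · nlinarith
      · nlinarith
    omega
  obtain ⟨e, he⟩ := Nat.exists_eq_add_of_le hge
  have he' : 3 * d - 2 * w₁ - 2 * w₂ = e := by omega
  have hhL : Lead w e (ι (infl f)) (infl g) := by
    have := lead_infl hfL
    have h2 : 3 * (d : ℤ) - 2 * (w 0 : ℕ) - 2 * (w 1 : ℕ) = e := by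
      simp only [w, Matrix.cons_val_zero, Matrix.cons_val_one]
      omega
    rwa [h2] at this
  have hrel : ∀ q, g ∣ infl g * q → g ∣ q := by
    intro q
    apply UniqueFactorizationMonoid.dvd_of_dvd_mul_right_of_no_prime_factors hg0
    intro p hp1 hp2 hp
    exact infl_coprime w d g hw' (by simpa [w] using hw) hgH hX hY hsf p hp hp1 hp2
  let c : ℕ → ℕ := fun n => (TT w₁ w₂ n).card
  have hc : ∀ n : ℕ, FiniteDimensional ℂ (PA ⧸ FI w n) ∧
      Module.finrank ℂ (PA ⧸ FI w n) = c n := fun n => quot_FI hw' n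
  have hD : ∀ n : ℕ, FiniteDimensional ℂ (PA ⧸ (Ideal.span {ι f} ⊔ FI w ((n + d : ℕ) : ℤ))) ∧
      c n + Module.finrank ℂ (PA ⧸ (Ideal.span {ι f} ⊔ FI w ((n + d : ℕ) : ℤ))) = c (n + d) := by
    intro n
    have hfd := (hc (n + d)).1
    have := quot_count (ι f) (FI w n) (FI w ((n + d : ℕ) : ℤ)) (by
      intro x
      push_cast
      constructor
      · exact mul_mem_FI hw' hg0 hfL
      · intro hx; exact FI_mul hx hfL.mem)
    rwa [(hc n).2, (hc (n + d)).2] at this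
  let I : Ideal PA := Ideal.span {ι f, ι (infl f)}
  have hI : I = Ideal.span {ι (infl f)} ⊔ Ideal.span {ι f} := by
    rw [sup_comm]; exact Ideal.span_insert _ _
  have hT : ∀ n : ℕ, FiniteDimensional ℂ (PA ⧸ (I ⊔ FI w ((n + (e + d) : ℕ) : ℤ))) ∧
      Module.finrank ℂ (PA ⧸ (I ⊔ FI w ((n + (e + d) : ℕ) : ℤ))) = e * k := by
    intro n
    have hfd := (hD (n + e)).1
    have h1 := quot_count (ι (infl f)) (Ideal.span {ι f} ⊔ FI w ((n + d : ℕ) : ℤ))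
      (Ideal.span {ι f} ⊔ FI w ((n + e + d : ℕ) : ℤ)) (by
      intro x
      have hcast : ((n + e + d : ℕ) : ℤ) = ((n + d : ℕ) : ℤ) + (e : ℤ) := by push_cast; ring
      rw [hcast]
      constructor
      · exact mul_mem_sup hw' hg0 hfL hhL hrel
      · intro hx
        obtain ⟨s, hs, t, ht, rfl⟩ := Submodule.mem_sup.mp hx
        rw [add_mul]
        exact Submodule.add_mem_sup (Ideal.mul_mem_right _ _ hs) (FI_mul ht hhL.mem))
    rw [← sup_assoc, ← hI, add_assoc n e d] at h1
    refine ⟨h1.1, ?_⟩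
    have h2 := h1.2
    have h3 := (hD (n + e)).2
    have h4 := (hD n).2
    have h5 := card_TT_add hw₁ hw₂ hcop' n e k
    rw [mul_comm k, ← hk] at h5
    change c (n + e + d) + c n = c (n + e) + c (n + d) + e * k at h5
    rw [add_assoc n e d] at h3 h5
    omega
  have hle : FI w ((e + d : ℕ) : ℤ) ≤ I := by
    apply FI_le_of_le hw'
    intro n
    have hfd := (hT n).1
    have h0 := (hT 0).2
    rw [zero_add] at h0
    have h1 := finrank_eq_imp (I := I ⊔ FI w ((n + (e + d) : ℕ) : ℤ))
      (J := I ⊔ FI w ((e + d : ℕ) : ℤ))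
      (sup_le_sup_left (FI_anti (by push_cast; omega)) I) (by rw [(hT n).2, h0])
    exact le_sup_right.trans h1
  have hfin := hT 0
  rw [zero_add, sup_eq_left.mpr hle] at hfin
  refine ⟨hfin.1, ?_⟩
  rw [he']
  change w₁ * w₂ * Module.finrank ℂ (PA ⧸ I) = d * e
  rw [hfin.2, hk]; ring
end

section
/- Let p, q : ℕ with 2 ≤ p < q and gcd(p, q) = 1, and let f := Y^p − X^q ∈ R := MvPolynomial ℂ (Fin 2). Then both A ⧸ Ideal.span {ι f, ι(i_f)} and A ⧸ Ideal.span {ι f, ι(v_f)} are finite-dimensional ℂ-vector spaces, with Module.finrank ℂ (A ⧸ Ideal.span {ι f, ι(i_f)}) = 3(p−1)(q−1) + p + q − 3 and Module.finrank ℂ (A ⧸ Ideal.span {ι f, ι(v_f)}) = 6(p−1)(q−1) + 3p + q − 6. -/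
open MvPolynomial

namespace Cusp

noncomputable def e (i j : ℕ) : Fin 2 →₀ ℕ := Finsupp.single 0 i + Finsupp.single 1 j

@[simp] lemma e0 (i j : ℕ) : e i j 0 = i := by simp [e]
@[simp] lemma e1 (i j : ℕ) : e i j 1 = j := by simp [e]
lemma e_eta (d : Fin 2 →₀ ℕ) : e (d 0) (d 1) = d := by
  ext i; fin_cases i <;> simp

lemma hs (p q : ℕ) (hp : 0 < p) (hq : 0 < q) :
    MvPowerSeries.HasSubst (S := ℂ) (τ := Unit)
      (![(PowerSeries.X : PowerSeries ℂ) ^ p, (PowerSeries.X : PowerSeries ℂ) ^ q] : Fin 2 → PowerSeries ℂ) := by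
  apply MvPowerSeries.hasSubst_of_constantCoeff_zero
  intro s
  have h : ∀ n, 0 < n → PowerSeries.constantCoeff ((PowerSeries.X : PowerSeries ℂ) ^ n) = 0 := by
    intro n hn
    simp [hn.ne']
  fin_cases s
  · exact h p hp
  · exact h q hq

/-- the parametrisation -/
noncomputable def φ (p q : ℕ) (hp : 0 < p) (hq : 0 < q) :
    MvPowerSeries (Fin 2) ℂ →ₐ[ℂ] PowerSeries ℂ :=
  MvPowerSeries.substAlgHom (hs p q hp hq)

lemma φ_coeff (p q : ℕ) (hp : 0 < p) (hq : 0 < q) (F : MvPowerSeries (Fin 2) ℂ) (n : ℕ) :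
    PowerSeries.coeff n (φ p q hp hq F) =
      finsum (fun d : Fin 2 →₀ ℕ =>
        if p * d 0 + q * d 1 = n then MvPowerSeries.coeff d F else 0) := by
  unfold φ
  rw [MvPowerSeries.substAlgHom_apply, PowerSeries.coeff, MvPowerSeries.coeff_subst (hs p q hp hq)]
  congr 1
  ext d
  have h : (d.prod fun s k => (![(PowerSeries.X : PowerSeries ℂ) ^ p,
      (PowerSeries.X : PowerSeries ℂ) ^ q] : Fin 2 → PowerSeries ℂ) s ^ k)
      = (PowerSeries.X : PowerSeries ℂ) ^ (p * d 0 + q * d 1) := by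
    rw [Finsupp.prod_fintype _ _ (by simp)]
    simp [Fin.prod_univ_two, pow_add, pow_mul]
  have h2 := PowerSeries.coeff_X_pow (R := ℂ) n (p * d 0 + q * d 1)
  rw [← h, PowerSeries.coeff] at h2
  refine (congrArg (fun z => MvPowerSeries.coeff d F • z) h2).trans ?_
  simp [eq_comm]

lemma φ_X0 (p q : ℕ) (hp : 0 < p) (hq : 0 < q) :
    φ p q hp hq (ι (MvPolynomial.X 0)) = PowerSeries.X ^ p := by
  have := MvPowerSeries.substAlgHom_X (R := ℂ) (hs p q hp hq) 0
  simpa [φ, ι] using this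

lemma φ_X1 (p q : ℕ) (hp : 0 < p) (hq : 0 < q) :
    φ p q hp hq (ι (MvPolynomial.X 1)) = PowerSeries.X ^ q := by
  have := MvPowerSeries.substAlgHom_X (R := ℂ) (hs p q hp hq) 1
  simpa [φ, ι] using this

noncomputable def S (p q : ℕ) (F : MvPowerSeries (Fin 2) ℂ) (i j : ℕ) : ℂ :=
  ∑ k ∈ Finset.range (i / q + 1), MvPowerSeries.coeff (e (i - k * q) (j + k * p)) F

lemma S_rec (p q : ℕ) (hq : 0 < q) (F : MvPowerSeries (Fin 2) ℂ) (i j : ℕ) :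
    S p q F i j = MvPowerSeries.coeff (e i j) F + if q ≤ i then S p q F (i - q) (j + p) else 0 := by
  unfold S
  split_ifs with h
  · have : i / q = (i - q) / q + 1 := by rw [Nat.div_eq_sub_div hq h]
    rw [this, Finset.sum_range_succ', add_comm]
    congr 1
    · simp
    · apply Finset.sum_congr rfl
      intro k _
      congr 3
      · rw [add_mul, one_mul, add_comm, Nat.sub_sub]
      · ring
  · rw [Nat.div_eq_of_lt (by omega)]; simp

lemma rep (p q : ℕ) (hp : 0 < p) (hcop : Nat.gcd p q = 1) {i j a b : ℕ} (hj : j < p)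
    (h : p * a + q * b = p * i + q * j) : ∃ k, b = j + k * p ∧ i = a + k * q := by
  have h1 : q * b ≡ q * j [MOD p] := by
    have : (p * a + q * b) % p = (p * i + q * j) % p := by rw [h]
    simpa [Nat.ModEq, Nat.add_mod] using this
  have h2 : b ≡ j [MOD p] := Nat.ModEq.cancel_left_of_coprime hcop h1
  have h3 : b % p = j := by rw [h2, Nat.mod_eq_of_lt hj]
  have h4 := Nat.div_add_mod b p
  refine ⟨b / p, by rw [← h3]; linarith, ?_⟩
  rw [h3] at h4
  have : p * (a + b / p * q) = p * i := by
    have : p * a + q * (p * (b / p) + j) = p * i + q * j := by rw [h4, h]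
    linarith
  exact (Nat.eq_of_mul_eq_mul_left hp this).symm

lemma φ_S (p q : ℕ) (hp : 0 < p) (hq : 0 < q) (hcop : Nat.gcd p q = 1)
    (F : MvPowerSeries (Fin 2) ℂ) (i j : ℕ) (hj : j < p) :
    PowerSeries.coeff (p * i + q * j) (φ p q hp hq F) = S p q F i j := by
  rw [φ_coeff]
  have key : ∀ k, k ∈ Finset.range (i / q + 1) → k * q ≤ i := fun k hk => by
    rw [Finset.mem_range, Nat.lt_succ_iff] at hk
    exact (Nat.le_div_iff_mul_le hq).1 hk
  rw [finsum_eq_sum_of_support_subset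
    (s := (Finset.range (i / q + 1)).image (fun k => e (i - k * q) (j + k * p)))]
  · rw [Finset.sum_image]
    · unfold S
      apply Finset.sum_congr rfl
      intro k hk
      rw [if_pos]
      obtain ⟨c, hc⟩ := Nat.exists_eq_add_of_le (key k hk)
      rw [e0, e1, hc, Nat.add_sub_cancel_left]
      ring
    · intro k _ k' _ h
      have := congrArg (fun d => d 1) h
      simp only [e1] at this
      exact Nat.eq_of_mul_eq_mul_right hp (by omega)
  · intro d hd
    simp only [Function.mem_support, ne_eq, ite_eq_right_iff, Classical.not_imp] at hd
    obtain ⟨k, h1, h2⟩ := rep p q hp hcop hj hd.1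
    simp only [Finset.coe_image, Set.mem_image, Finset.coe_range, Set.mem_Iio]
    refine ⟨k, ?_, ?_⟩
    · rw [Nat.lt_succ_iff, Nat.le_div_iff_mul_le hq]; omega
    · rw [← e_eta d, h1, h2]; simp

lemma coeff_mono (s : Fin 2) (n : ℕ) (Q : MvPowerSeries (Fin 2) ℂ) (d : Fin 2 →₀ ℕ) :
    MvPowerSeries.coeff d (ι (MvPolynomial.X s) ^ n * Q) =
      if n ≤ d s then MvPowerSeries.coeff (d - Finsupp.single s n) Q else 0 := by
  have : ι (MvPolynomial.X s) = (MvPowerSeries.X s : MvPowerSeries (Fin 2) ℂ) := by simp [ι]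
  rw [this, MvPowerSeries.X_pow_eq, MvPowerSeries.coeff_monomial_mul]
  simp

lemma φ_ker (p q : ℕ) (hp : 0 < p) (hq : 0 < q) (hcop : Nat.gcd p q = 1)
    (F : MvPowerSeries (Fin 2) ℂ) (h : φ p q hp hq F = 0) :
    ∃ Q, F = ι (MvPolynomial.X 1 ^ p - MvPolynomial.X 0 ^ q) * Q := by
  let Q : MvPowerSeries (Fin 2) ℂ := fun d => S p q F (d 0) (d 1 + p)
  have hQ : ∀ d, MvPowerSeries.coeff d Q = S p q F (d 0) (d 1 + p) := fun d => rfl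
  refine ⟨Q, ?_⟩
  ext d
  rw [map_sub, map_pow, map_pow, sub_mul, map_sub, coeff_mono, coeff_mono, hQ, hQ]
  have r := S_rec p q hq F (d 0) (d 1)
  rw [e_eta] at r
  have h1 : (if p ≤ d 1 then S p q F ((d - Finsupp.single 1 p : Fin 2 →₀ ℕ) 0) ((d - Finsupp.single 1 p : Fin 2 →₀ ℕ) 1 + p) else 0)
      = S p q F (d 0) (d 1) := by
    split_ifs with hh
    · simp [Nat.sub_add_cancel hh]
    · rw [← φ_S p q hp hq hcop F _ _ (by omega), h]; simp
  rw [h1, r]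
  simp

lemma φ_f (p q : ℕ) (hp : 0 < p) (hq : 0 < q) :
    φ p q hp hq (ι (MvPolynomial.X 1 ^ p - MvPolynomial.X 0 ^ q)) = 0 := by
  rw [map_sub, map_sub, map_pow, map_pow, map_pow, map_pow, φ_X0, φ_X1, ← pow_mul, ← pow_mul,
    mul_comm, sub_self]

lemma φ_cond (p q : ℕ) (hp : 0 < p) (hq : 0 < q) (hcop : Nat.gcd p q = 1)
    (h : PowerSeries ℂ) (hh : ∀ n < p * q, PowerSeries.coeff n h = 0) :
    ∃ F, φ p q hp hq F = h := by
  let F : MvPowerSeries (Fin 2) ℂ := fun d =>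
    if d 1 < p then PowerSeries.coeff (p * d 0 + q * d 1) h else 0
  have hF : ∀ d, MvPowerSeries.coeff d F =
    if d 1 < p then PowerSeries.coeff (p * d 0 + q * d 1) h else 0 := fun d => rfl
  refine ⟨F, ?_⟩
  ext n
  by_cases hn : ∃ i j, j < p ∧ n = p * i + q * j
  · obtain ⟨i, j, hj, rfl⟩ := hn
    rw [φ_S p q hp hq hcop F i j hj, S, Finset.sum_range_succ', Finset.sum_eq_zero, hF]
    · simp [hj]
    · intro k _
      rw [hF, if_neg]
      simp only [e1, not_lt]
      nlinarith
  · have hlt : n < p * q := by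
      by_contra hc
      push Not at hc
      apply hn
      obtain ⟨j, hj⟩ := Nat.exists_mul_mod_eq_of_coprime (n := q) (k := p) n
        (by simpa [Nat.Coprime, Nat.gcd_comm] using hcop) hp.ne'
      obtain ⟨hj, hm⟩ := hj
      have h1 : q * j ≤ n := le_trans (by nlinarith) hc
      obtain ⟨i, hi⟩ := (Nat.modEq_iff_dvd' h1).1 hm
      exact ⟨i, j, hj, by omega⟩
    rw [hh n hlt, φ_coeff]
    rw [show (fun d : Fin 2 →₀ ℕ => if p * d 0 + q * d 1 = n then MvPowerSeries.coeff d F else 0)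
      = fun _ => 0 from ?_, finsum_zero]
    ext d
    split_ifs with hd
    · rw [hF, if_neg]
      intro hc
      exact hn ⟨_, _, hc, hd.symm⟩
    · rfl

lemma length_X_pow (m : ℕ) (N : Submodule ℂ (PowerSeries ℂ))
    (hN : ∀ h, h ∈ N ↔ (PowerSeries.X : PowerSeries ℂ) ^ m ∣ h) :
    Module.length ℂ (PowerSeries ℂ ⧸ N) = m := by
  let L : PowerSeries ℂ →ₗ[ℂ] (Fin m → ℂ) := LinearMap.pi (fun i => PowerSeries.coeff (i : ℕ))
  have hs : Function.Surjective L := by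
    intro v
    refine ⟨PowerSeries.mk (fun n => if h : n < m then v ⟨n, h⟩ else 0), ?_⟩
    ext i
    simp [L]
  have hk : LinearMap.ker L = N := by
    ext h
    rw [hN, PowerSeries.X_pow_dvd_iff, LinearMap.mem_ker]
    constructor
    · intro hh n hn
      exact congrFun hh ⟨n, hn⟩
    · intro hh
      ext i
      exact hh i i.2
  subst hk
  rw [(L.quotKerEquivOfSurjective hs).length_eq, Module.length_eq_finrank]
  simp

lemma main (p q : ℕ) (hp : 0 < p) (hq : 0 < q) (hcop : Nat.gcd p q = 1)
    (g : MvPolynomial (Fin 2) ℂ) (k n : ℕ) (U : PowerSeries ℂ)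
    (hU : PowerSeries.constantCoeff U ≠ 0)
    (hg : PowerSeries.X ^ k * φ p q hp hq (ι g) = PowerSeries.X ^ n * U) :
    FiniteDimensional ℂ (MvPowerSeries (Fin 2) ℂ ⧸
        Ideal.span {ι (MvPolynomial.X 1 ^ p - MvPolynomial.X 0 ^ q), ι g}) ∧
    interMult (MvPolynomial.X 1 ^ p - MvPolynomial.X 0 ^ q) g + k = n := by
  set f : MvPolynomial (Fin 2) ℂ := MvPolynomial.X 1 ^ p - MvPolynomial.X 0 ^ q with hf
  set G := φ p q hp hq (ι g) with hG
  have hUu : IsUnit U := PowerSeries.isUnit_iff_constantCoeff.2 (isUnit_iff_ne_zero.2 hU)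
  have hXne : (PowerSeries.X : PowerSeries ℂ) ≠ 0 := PowerSeries.X_ne_zero
  -- k ≤ n
  have hkn : k ≤ n := by
    have : (PowerSeries.X : PowerSeries ℂ) ^ k ∣ PowerSeries.X ^ n * U := ⟨G, hg.symm⟩
    rw [hUu.dvd_mul_right] at this
    exact (pow_dvd_pow_iff hXne PowerSeries.X_prime.not_isUnit).1 this
  obtain ⟨m, rfl⟩ := Nat.exists_eq_add_of_le hkn
  have hGm : G = PowerSeries.X ^ m * U := by
    rw [pow_add, mul_assoc] at hg
    exact mul_left_cancel₀ (pow_ne_zero _ hXne) hg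
  have hG0 : G ≠ 0 := by rw [hGm]; exact mul_ne_zero (pow_ne_zero _ hXne) hUu.ne_zero
  let Φ : MvPowerSeries (Fin 2) ℂ →ₗ[ℂ] PowerSeries ℂ := (φ p q hp hq).toLinearMap
  have hΦ : ∀ F, Φ F = φ p q hp hq F := fun _ => rfl
  let M : PowerSeries ℂ →ₗ[ℂ] PowerSeries ℂ := LinearMap.mulLeft ℂ G
  have hM : ∀ h, M h = G * h := fun _ => rfl
  let B := LinearMap.range Φ
  let GB := B.map M
  let GC := LinearMap.range M
  have hGC : Module.length ℂ (PowerSeries ℂ ⧸ GC) = m := by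
    apply length_X_pow
    intro h
    have : h ∈ GC ↔ G ∣ h := by
      constructor
      · rintro ⟨a, rfl⟩; exact ⟨a, rfl⟩
      · rintro ⟨a, rfl⟩; exact ⟨a, rfl⟩
    rw [this, hGm, hUu.mul_right_dvd]
  have hB : Module.length ℂ (PowerSeries ℂ ⧸ B) ≠ ⊤ := by
    let N : Submodule ℂ (PowerSeries ℂ) :=
      (Ideal.span {(PowerSeries.X : PowerSeries ℂ) ^ (p * q)}).restrictScalars ℂ
    have hN : ∀ h, h ∈ N ↔ (PowerSeries.X : PowerSeries ℂ) ^ (p * q) ∣ h := by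
      intro h
      simp [N, Ideal.mem_span_singleton]
    have hNB : N ≤ B := by
      intro h hh
      rw [hN, PowerSeries.X_pow_dvd_iff] at hh
      obtain ⟨F, hF⟩ := φ_cond p q hp hq hcop h hh
      exact ⟨F, hF⟩
    have h1 := length_X_pow _ N hN
    have h2 := Module.length_le_of_surjective (Submodule.factor hNB) (Submodule.factor_surjective hNB)
    rw [h1] at h2
    exact ne_top_of_le_ne_top (ENat.natCast_ne_top _) h2
  have hGBB : GB ≤ B := by
    rintro _ ⟨_, ⟨F, rfl⟩, rfl⟩
    exact ⟨ι g * F, by rw [hM, hΦ, hΦ, map_mul]⟩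
  have hGBGC : GB ≤ GC := by
    rintro _ ⟨h, _, rfl⟩
    exact ⟨h, rfl⟩
  -- first exact sequence
  let J : Ideal (MvPowerSeries (Fin 2) ℂ) := Ideal.span {ι f, ι g}
  let a0 : MvPowerSeries (Fin 2) ℂ →ₗ[ℂ] PowerSeries ℂ ⧸ GB := GB.mkQ ∘ₗ Φ
  have ha0 : ∀ F, a0 F = 0 ↔ F ∈ J := by
    intro F
    have : a0 F = 0 ↔ Φ F ∈ GB := by simp [a0]
    rw [this]
    constructor
    · rintro ⟨_, ⟨H, rfl⟩, hH⟩
      have : φ p q hp hq (F - ι g * H) = 0 := by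
        rw [map_sub, map_mul, ← hΦ, ← hH, hM, hΦ, sub_self]
      obtain ⟨Q, hQ⟩ := φ_ker p q hp hq hcop _ this
      rw [Ideal.mem_span_pair]
      refine ⟨Q, H, ?_⟩
      rw [← hf] at hQ
      linear_combination -hQ
    · intro hF
      obtain ⟨Q, H, rfl⟩ := Ideal.mem_span_pair.1 hF
      refine ⟨Φ H, ⟨H, rfl⟩, ?_⟩
      rw [hM, hΦ, hΦ, map_add, map_mul, map_mul, φ_f, mul_zero, zero_add, mul_comm]
  let a : (MvPowerSeries (Fin 2) ℂ ⧸ J) →ₗ[ℂ] PowerSeries ℂ ⧸ GB :=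
    (J.restrictScalars ℂ).liftQ a0 (fun F hF => (ha0 F).2 hF)
  have ha : ∀ F, a (Ideal.Quotient.mk J F) = GB.mkQ (Φ F) := fun F => rfl
  have e1 := Module.length_eq_add_of_exact a (Submodule.factor hGBB)
    (by
      rw [injective_iff_map_eq_zero]
      intro x
      obtain ⟨F, rfl⟩ := Ideal.Quotient.mk_surjective x
      intro h
      exact Ideal.Quotient.eq_zero_iff_mem.2 ((ha0 F).1 h))
    (Submodule.factor_surjective hGBB)
    (by
      intro y
      obtain ⟨h, rfl⟩ := GB.mkQ_surjective y
      have : (Submodule.factor hGBB) (GB.mkQ h) = 0 ↔ h ∈ B := by simp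
      rw [this]
      constructor
      · rintro ⟨F, rfl⟩
        exact ⟨Ideal.Quotient.mk J F, rfl⟩
      · rintro ⟨x, hx⟩
        obtain ⟨F, rfl⟩ := Ideal.Quotient.mk_surjective x
        rw [ha, ← sub_eq_zero, ← map_sub] at hx
        have h1 : Φ F - h ∈ B := hGBB ((Submodule.Quotient.mk_eq_zero GB).1 hx)
        have h2 : Φ F ∈ B := ⟨F, rfl⟩
        have := B.sub_mem h2 h1
        simpa using this)
  let b : (PowerSeries ℂ ⧸ B) →ₗ[ℂ] PowerSeries ℂ ⧸ GB :=
    B.mapQ GB M (fun h hh => ⟨h, hh, rfl⟩)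
  have hb : ∀ h, b (B.mkQ h) = GB.mkQ (M h) := fun h => rfl
  have e2 := Module.length_eq_add_of_exact b (Submodule.factor hGBGC)
    (by
      rw [injective_iff_map_eq_zero]
      intro x
      obtain ⟨h, rfl⟩ := B.mkQ_surjective x
      intro hh
      rw [hb] at hh
      have : M h ∈ GB := by simpa using hh
      obtain ⟨h', h1, h2⟩ := this
      rw [hM, hM] at h2
      have := mul_left_cancel₀ hG0 h2
      subst this
      simpa using h1)
    (Submodule.factor_surjective hGBGC)
    (by
      intro y
      obtain ⟨h, rfl⟩ := GB.mkQ_surjective y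
      have : (Submodule.factor hGBGC) (GB.mkQ h) = 0 ↔ h ∈ GC := by simp
      rw [this]
      constructor
      · rintro ⟨F, rfl⟩
        exact ⟨B.mkQ F, rfl⟩
      · rintro ⟨x, hx⟩
        obtain ⟨F, rfl⟩ := B.mkQ_surjective x
        rw [hb, ← sub_eq_zero, ← map_sub] at hx
        have h1 : M F - h ∈ GC := hGBGC ((Submodule.Quotient.mk_eq_zero GB).1 hx)
        have h2 : M F ∈ GC := ⟨F, rfl⟩
        have := GC.sub_mem h2 h1
        simpa using this)
  have hlen : Module.length ℂ (MvPowerSeries (Fin 2) ℂ ⧸ J) = m := by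
    rw [e1, add_comm, hGC] at e2
    exact (ENat.addLECancellable_of_ne_top hB).inj.1 e2
  have hfin : FiniteDimensional ℂ (MvPowerSeries (Fin 2) ℂ ⧸ J) := by
    have : Module.length ℂ (MvPowerSeries (Fin 2) ℂ ⧸ J) ≠ ⊤ := by rw [hlen]; simp
    rw [Module.length_ne_top_iff, isFiniteLength_iff_isNoetherian_isArtinian] at this
    have := this.1
    infer_instance
  refine ⟨hfin, ?_⟩
  rw [Module.length_eq_finrank] at hlen
  have : interMult f g = m := by exact_mod_cast hlen
  omega

section eul
variable (n : ℕ) {R : Type*} [CommRing R] (u : R)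
lemma eul1 : (n : R) * u ^ (n - 1) * u = n * u ^ n := by
  rcases n with _ | n
  · simp
  · simp; ring
lemma eul2 : (n : R) * ((n - 1 : ℕ) * u ^ (n - 1 - 1)) * u ^ 2 = n * (n - 1) * u ^ n := by
  rcases n with _ | _ | n
  · simp
  · simp
  · simp; ring
lemma eul3 : (n : R) * ((n - 1 : ℕ) * ((n - 1 - 1 : ℕ) * u ^ (n - 1 - 1 - 1))) * u ^ 3
    = n * (n - 1) * (n - 2) * u ^ n := by
  rcases n with _ | _ | _ | n
  · simp
  · simp
  · simp
  · simp; ring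
end eul

end Cusp

/-- **Values of `I_f` and `V_f` for the curve `Y^p = X^q`** (`2 ≤ p < q`, `gcd(p,q)=1`),
parametrised by `(t^p, t^q)` with Milnor number `(p−1)(q−1)`:
`I_f = 3(p−1)(q−1) + p + q − 3` and `V_f = 6(p−1)(q−1) + 3p + q − 6`
(Theorems 2.6 and 3.8, covering several entries of Tables 1 and 3). -/
theorem inflection_vertex_numbers_quasihomogeneous_cusp
    (p q : ℕ) (hp : 2 ≤ p) (hpq : p < q) (hcop : Nat.gcd p q = 1) :
    FiniteDimensional ℂ (MvPowerSeries (Fin 2) ℂ ⧸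
        Ideal.span {ι (MvPolynomial.X 1 ^ p - MvPolynomial.X 0 ^ q),
          ι (infl (MvPolynomial.X 1 ^ p - MvPolynomial.X 0 ^ q))}) ∧
    FiniteDimensional ℂ (MvPowerSeries (Fin 2) ℂ ⧸
        Ideal.span {ι (MvPolynomial.X 1 ^ p - MvPolynomial.X 0 ^ q),
          ι (vert (MvPolynomial.X 1 ^ p - MvPolynomial.X 0 ^ q))}) ∧
    interMult (MvPolynomial.X 1 ^ p - MvPolynomial.X 0 ^ q)
        (infl (MvPolynomial.X 1 ^ p - MvPolynomial.X 0 ^ q))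
      = 3 * (p - 1) * (q - 1) + p + q - 3 ∧
    interMult (MvPolynomial.X 1 ^ p - MvPolynomial.X 0 ^ q)
        (vert (MvPolynomial.X 1 ^ p - MvPolynomial.X 0 ^ q))
      = 6 * (p - 1) * (q - 1) + 3 * p + q - 6 := by
  have hp0 : 0 < p := by omega
  have hq0 : 0 < q := by omega
  have h2 : q ≠ 2 * p := by
    rintro rfl
    simp at hcop
    omega
  set f : MvPolynomial (Fin 2) ℂ := MvPolynomial.X 1 ^ p - MvPolynomial.X 0 ^ q with hf
  have fx : dx f = - ((q : MvPolynomial (Fin 2) ℂ) * MvPolynomial.X 0 ^ (q - 1)) := by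
    simp [dx, f, Derivation.leibniz_pow]
  have fy : dy f = (p : MvPolynomial (Fin 2) ℂ) * MvPolynomial.X 1 ^ (p - 1) := by
    simp [dy, f, Derivation.leibniz_pow]
  have fxy : dy (dx f) = 0 := by
    rw [fx]; simp [dy, Derivation.leibniz_pow]
  have fxx : dx (dx f) = - ((q : MvPolynomial (Fin 2) ℂ) * (((q - 1 : ℕ) : MvPolynomial (Fin 2) ℂ) * MvPolynomial.X 0 ^ (q - 1 - 1))) := by
    rw [fx]; simp [dx, Derivation.leibniz_pow, -Nat.cast_sub]
  have fyy : dy (dy f) = (p : MvPolynomial (Fin 2) ℂ) * (((p - 1 : ℕ) : MvPolynomial (Fin 2) ℂ) * MvPolynomial.X 1 ^ (p - 1 - 1)) := by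
    rw [fy]; simp [dy, Derivation.leibniz_pow, -Nat.cast_sub]
  have fxxy : dy (dx (dx f)) = 0 := by
    rw [fxx]; simp [dy, Derivation.leibniz_pow]
  have fxyy : dy (dy (dx f)) = 0 := by
    rw [fxy]; simp [dy]
  have fxxx : dx (dx (dx f)) =
      - ((q : MvPolynomial (Fin 2) ℂ) * (((q - 1 : ℕ) : MvPolynomial (Fin 2) ℂ) * (((q - 1 - 1 : ℕ) : MvPolynomial (Fin 2) ℂ) * MvPolynomial.X 0 ^ (q - 1 - 1 - 1)))) := by
    rw [fxx]; simp [dx, Derivation.leibniz_pow, -Nat.cast_sub]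
  have fyyy : dy (dy (dy f)) =
      (p : MvPolynomial (Fin 2) ℂ) * (((p - 1 : ℕ) : MvPolynomial (Fin 2) ℂ) * (((p - 1 - 1 : ℕ) : MvPolynomial (Fin 2) ℂ) * MvPolynomial.X 1 ^ (p - 1 - 1 - 1))) := by
    rw [fyy]; simp [dy, Derivation.leibniz_pow, -Nat.cast_sub]
  let θ : MvPolynomial (Fin 2) ℂ →+* PowerSeries ℂ := (Cusp.φ p q hp0 hq0).toRingHom.comp ι
  have hθ : ∀ F, Cusp.φ p q hp0 hq0 (ι F) = θ F := fun _ => rfl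
  have θ0 : θ (MvPolynomial.X 0) = PowerSeries.X ^ p := Cusp.φ_X0 p q hp0 hq0
  have θ1 : θ (MvPolynomial.X 1) = PowerSeries.X ^ q := Cusp.φ_X1 p q hp0 hq0
  set t : PowerSeries ℂ := PowerSeries.X with ht
  have tu : (t ^ p) ^ q = t ^ (p * q) := by rw [← pow_mul]
  have tw : (t ^ q) ^ p = t ^ (p * q) := by rw [← pow_mul, mul_comm]
  have gx : θ (dx f) * t ^ p = - (q * t ^ (p * q)) := by
    rw [fx, ← tu, ← Cusp.eul1 q (t ^ p)]; simp [θ0]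
  have gxx : θ (dx (dx f)) * (t ^ p) ^ 2 = - (q * (q - 1) * t ^ (p * q)) := by
    rw [fxx, ← tu, ← Cusp.eul2 q (t ^ p)]; simp [θ0, -Nat.cast_sub]
  have gxxx : θ (dx (dx (dx f))) * (t ^ p) ^ 3 = - (q * (q - 1) * (q - 2) * t ^ (p * q)) := by
    rw [fxxx, ← tu, ← Cusp.eul3 q (t ^ p)]; simp [θ0, -Nat.cast_sub]
  have gy : θ (dy f) * t ^ q = (p * t ^ (p * q)) := by
    rw [fy, ← tw, ← Cusp.eul1 p (t ^ q)]; simp [θ1]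
  have gyy : θ (dy (dy f)) * (t ^ q) ^ 2 = (p * (p - 1) * t ^ (p * q)) := by
    rw [fyy, ← tw, ← Cusp.eul2 p (t ^ q)]; simp [θ1, -Nat.cast_sub]
  have gyyy : θ (dy (dy (dy f))) * (t ^ q) ^ 3 = (p * (p - 1) * (p - 2) * t ^ (p * q)) := by
    rw [fyyy, ← tw, ← Cusp.eul3 p (t ^ q)]; simp [θ1, -Nat.cast_sub]
  have gi : θ (infl f) = θ (dy f) ^ 2 * θ (dx (dx f)) + θ (dx f) ^ 2 * θ (dy (dy f)) := by
    rw [infl, fxy]; simp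
  have gv : θ (vert f) = (θ (dx f) ^ 2 + θ (dy f) ^ 2) *
      (θ (dx f) ^ 3 * θ (dy (dy (dy f))) - θ (dy f) ^ 3 * θ (dx (dx (dx f)))) +
      3 * (θ (dx f) * θ (dy f) * (θ (dx (dx f)) - θ (dy (dy f)))) * θ (infl f) := by
    rw [vert, fxyy, fxxy, fxy]; simp [show θ 3 = 3 from map_ofNat θ 3]
  generalize θ (dx f) = Fx at *
  generalize θ (dx (dx f)) = Fxx at *
  generalize θ (dx (dx (dx f))) = Fxxx at *
  generalize θ (dy f) = Fy at *
  generalize θ (dy (dy f)) = Fyy at *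
  generalize θ (dy (dy (dy f))) = Fyyy at *
  have ci : t ^ (2 * p + 2 * q) * θ (infl f)
      = t ^ (3 * (p * q)) * ((p : PowerSeries ℂ) * q * (p - q)) := by
    have : t ^ (2 * p + 2 * q) * θ (infl f) = (Fy * t ^ q) ^ 2 * (Fxx * (t ^ p) ^ 2)
      + (Fx * t ^ p) ^ 2 * (Fyy * (t ^ q) ^ 2) := by rw [gi]; ring
    rw [this, gx, gy, gxx, gyy]; ring
  have cv : t ^ (5 * p + 5 * q) * θ (vert f)
      = t ^ (6 * (p * q) + 2 * p) * ((p : PowerSeries ℂ) ^ 3 * q * (2 * p - q) * (p - q) +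
        t ^ (2 * (q - p)) * ((q : PowerSeries ℂ) ^ 2 * (p ^ 3 * q * (q - 1) * (q - 2) - q ^ 3 * p * (p - 1) * (p - 2))
          + 3 * (q * p * q * (q - 1)) * (p * q * (p - q)))) := by
    have h1 : t ^ (5 * p + 5 * q) * θ (vert f) =
      ((Fx * t ^ p) ^ 2 * (t ^ q) ^ 2 + (Fy * t ^ q) ^ 2 * (t ^ p) ^ 2) *
      ((Fx * t ^ p) ^ 3 * (Fyyy * (t ^ q) ^ 3) - (Fy * t ^ q) ^ 3 * (Fxxx * (t ^ p) ^ 3)) +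
      3 * ((Fx * t ^ p) * (Fy * t ^ q) * (Fxx * (t ^ p) ^ 2 * (t ^ q) ^ 2
        - Fyy * (t ^ q) ^ 2 * (t ^ p) ^ 2)) * (t ^ (2 * p + 2 * q) * θ (infl f)) := by
      rw [gv]; ring
    have h3 : t ^ (6 * (p * q) + 2 * p) * t ^ (2 * (q - p)) = t ^ (6 * (p * q)) * (t ^ q) ^ 2 := by
      rw [← pow_add, ← pow_mul, ← pow_add]; congr 1; omega
    rw [h1, ci, gx, gy, gxx, gyy, gxxx, gyyy, mul_add, ← mul_assoc (t ^ (6 * (p * q) + 2 * p)) (t ^ _), h3]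
    ring
  have hpc : (p : ℂ) ≠ 0 := by exact_mod_cast hp0.ne'
  have hqc : (q : ℂ) ≠ 0 := by exact_mod_cast hq0.ne'
  have hpqc : (p : ℂ) - q ≠ 0 := sub_ne_zero.2 (by exact_mod_cast hpq.ne)
  have h2c : 2 * (p : ℂ) - q ≠ 0 := sub_ne_zero.2 (by exact_mod_cast h2.symm)
  have cc : ∀ n : ℕ, PowerSeries.constantCoeff (n : PowerSeries ℂ) = n := fun n => map_natCast _ n
  obtain ⟨A1, A2⟩ := Cusp.main p q hp0 hq0 hcop (infl f) _ _ _ (by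
    simp only [map_mul, map_sub, cc]
    exact mul_ne_zero (mul_ne_zero hpc hqc) hpqc) ci
  obtain ⟨B1, B2⟩ := Cusp.main p q hp0 hq0 hcop (vert f) _ _ _ (by
    have hz : PowerSeries.constantCoeff (t ^ (2 * (q - p))) = 0 := by
      rw [map_pow, ht, PowerSeries.constantCoeff_X, zero_pow (by omega)]
    rw [map_add, map_mul _ (t ^ _), hz, zero_mul, add_zero]
    simp only [map_mul, map_sub, map_pow, cc, map_ofNat]
    exact mul_ne_zero (mul_ne_zero (mul_ne_zero (pow_ne_zero _ hpc) hqc) h2c) hpqc) cv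
  refine ⟨A1, B1, ?_, ?_⟩
  · rw [← hf] at A2
    obtain ⟨a, rfl⟩ := Nat.exists_eq_add_of_le hp
    obtain ⟨b, rfl⟩ := Nat.exists_eq_add_of_le (show 1 ≤ q by omega)
    rw [show 2 + a - 1 = a + 1 by omega, show 1 + b - 1 = b by omega]
    ring_nf at A2 ⊢
    omega
  · rw [← hf] at B2
    obtain ⟨a, rfl⟩ := Nat.exists_eq_add_of_le hp
    obtain ⟨b, rfl⟩ := Nat.exists_eq_add_of_le (show 1 ≤ q by omega)
    rw [show 2 + a - 1 = a + 1 by omega, show 1 + b - 1 = b by omega]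
    ring_nf at B2 ⊢
    omega
end

section
/- Let k, j : ℕ with 2 ≤ j ≤ k and let f := (Y − X^j)² − X^(2k+1) ∈ R := MvPolynomial ℂ (Fin 2) (a curve with an A_{2k}-singularity at the origin). Then A ⧸ Ideal.span {ι f, ι(i_f)} is a finite-dimensional ℂ-vector space with Module.finrank ℂ (A ⧸ Ideal.span {ι f, ι(i_f)}) = 6k + 2j − 1; moreover, if 3 ≤ j, then A ⧸ Ideal.span {ι f, ι(v_f)} is finite-dimensional with Module.finrank ℂ (A ⧸ Ideal.span {ι f, ι(v_f)}) = 12k + 2j. -/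
open MvPolynomial

theorem aux_lin {K V S : Type*} [Field K] [AddCommGroup V] [Module K V]
    [AddCommGroup S] [Module K S]
    (φ : S →ₗ[K] V) (m : V →ₗ[K] V) (hm : Function.Injective m)
    (hmB : ∀ v ∈ LinearMap.range φ, m v ∈ LinearMap.range φ)
    (N : Submodule K S) (hN : ∀ s, s ∈ N ↔ ∃ v ∈ LinearMap.range φ, m v = φ s)
    [FiniteDimensional K (V ⧸ LinearMap.range φ)] [FiniteDimensional K (V ⧸ LinearMap.range m)] :
    FiniteDimensional K (S ⧸ N) ∧
      Module.finrank K (S ⧸ N) = Module.finrank K (V ⧸ LinearMap.range m) := by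
  set B := LinearMap.range φ with hB
  set C := B.map m with hC
  have hCB : C ≤ B := by
    rintro _ ⟨v, hv, rfl⟩
    exact hmB v hv
  -- the map V/B → V/C
  let α : (V ⧸ B) →ₗ[K] (V ⧸ C) := Submodule.mapQ B C m (fun v hv => ⟨v, hv, rfl⟩)
  have hCR : C ≤ LinearMap.range m := by
    rintro _ ⟨v, hv, rfl⟩
    exact ⟨v, rfl⟩
  let β : (V ⧸ C) →ₗ[K] (V ⧸ LinearMap.range m) := Submodule.factor hCR
  have hα : Function.Injective α := by
    rw [← LinearMap.ker_eq_bot, LinearMap.ker_eq_bot']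
    intro x
    obtain ⟨v, rfl⟩ := Submodule.mkQ_surjective _ x
    intro h
    have : Submodule.Quotient.mk (p := C) (m v) = 0 := h
    rw [Submodule.Quotient.mk_eq_zero] at this
    obtain ⟨w, hw, hwv⟩ := this
    have := hm hwv
    subst this
    exact (Submodule.Quotient.mk_eq_zero _).2 hw
  have hβ : Function.Surjective β := Submodule.factor_surjective hCR
  have hαβ : LinearMap.ker β = LinearMap.range α := by
    ext x
    obtain ⟨v, rfl⟩ := Submodule.mkQ_surjective _ x
    constructor
    · intro h
      have : Submodule.Quotient.mk (p := LinearMap.range m) v = 0 := h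
      rw [Submodule.Quotient.mk_eq_zero] at this
      obtain ⟨w, rfl⟩ := this
      exact ⟨Submodule.Quotient.mk w, rfl⟩
    · rintro ⟨y, hy⟩
      obtain ⟨w, rfl⟩ := Submodule.mkQ_surjective _ y
      rw [← hy]
      change Submodule.Quotient.mk (p := LinearMap.range m) (m w) = 0
      rw [Submodule.Quotient.mk_eq_zero]
      exact ⟨w, rfl⟩
  have f1 : FiniteDimensional K (V ⧸ C) := by
    have : FiniteDimensional K (LinearMap.ker β) := by rw [hαβ]; infer_instance
    have : FiniteDimensional K ((V ⧸ C) ⧸ LinearMap.ker β) :=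
      Module.Finite.equiv (β.quotKerEquivOfSurjective hβ).symm
    exact Module.Finite.of_submodule_quotient (LinearMap.ker β)
  have d1 : Module.finrank K (V ⧸ LinearMap.range m) + Module.finrank K (V ⧸ B)
      = Module.finrank K (V ⧸ C) := by
    have := LinearMap.finrank_range_add_finrank_ker β
    rw [hαβ, LinearMap.finrank_range_of_inj hα, LinearMap.range_eq_top.2 hβ, finrank_top] at this
    exact this
  -- the map S/N → V/C
  have hNC : ∀ s, s ∈ N ↔ φ s ∈ C := by
    intro s
    rw [hN]; rfl
  let γ : (S ⧸ N) →ₗ[K] (V ⧸ C) := Submodule.mapQ N C φ (fun s hs => (hNC s).1 hs)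
  have hγ : Function.Injective γ := by
    rw [← LinearMap.ker_eq_bot, LinearMap.ker_eq_bot']
    intro x
    obtain ⟨v, rfl⟩ := Submodule.mkQ_surjective _ x
    intro h
    have : Submodule.Quotient.mk (p := C) (φ v) = 0 := h
    rw [Submodule.Quotient.mk_eq_zero] at this
    exact (Submodule.Quotient.mk_eq_zero _).2 ((hNC _).2 this)
  let δ : (V ⧸ C) →ₗ[K] (V ⧸ B) := Submodule.factor hCB
  have hδ : Function.Surjective δ := Submodule.factor_surjective hCB
  have hγδ : LinearMap.ker δ = LinearMap.range γ := by
    ext x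
    obtain ⟨v, rfl⟩ := Submodule.mkQ_surjective _ x
    constructor
    · intro h
      have : Submodule.Quotient.mk (p := B) v = 0 := h
      rw [Submodule.Quotient.mk_eq_zero] at this
      obtain ⟨w, rfl⟩ := this
      exact ⟨Submodule.Quotient.mk w, rfl⟩
    · rintro ⟨y, hy⟩
      obtain ⟨w, rfl⟩ := Submodule.mkQ_surjective _ y
      rw [← hy]
      change Submodule.Quotient.mk (p := B) (φ w) = 0
      rw [Submodule.Quotient.mk_eq_zero]
      exact ⟨w, rfl⟩
  have d2 : Module.finrank K (V ⧸ B) + Module.finrank K (S ⧸ N)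
      = Module.finrank K (V ⧸ C) := by
    have := LinearMap.finrank_range_add_finrank_ker δ
    rw [hγδ, LinearMap.finrank_range_of_inj hγ, LinearMap.range_eq_top.2 hδ, finrank_top] at this
    exact this
  exact ⟨Module.Finite.of_injective γ hγ, by omega⟩

/-- the quotient of power series by a multiple of `X^n`. -/
theorem aux_quot (n : ℕ) (g e : PowerSeries ℂ) (he : PowerSeries.constantCoeff e ≠ 0)
    (hg : g = PowerSeries.X ^ n * e) :
    FiniteDimensional ℂ (PowerSeries ℂ ⧸ LinearMap.range (LinearMap.mulLeft ℂ g)) ∧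
    Module.finrank ℂ (PowerSeries ℂ ⧸ LinearMap.range (LinearMap.mulLeft ℂ g)) = n := by
  let c : PowerSeries ℂ →ₗ[ℂ] (Fin n → ℂ) := LinearMap.pi fun i => PowerSeries.coeff (i : ℕ)
  have hc : Function.Surjective c := by
    intro v
    refine ⟨PowerSeries.mk fun i => if h : i < n then v ⟨i, h⟩ else 0, ?_⟩
    ext i
    simp [c]
  have hk : LinearMap.ker c = LinearMap.range (LinearMap.mulLeft ℂ g) := by
    ext x
    rw [LinearMap.mem_ker]
    have h1 : c x = 0 ↔ PowerSeries.X ^ n ∣ x := by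
      rw [PowerSeries.X_pow_dvd_iff]
      constructor
      · intro h m hm
        exact congrFun h ⟨m, hm⟩
      · intro h
        ext i
        exact h i i.2
    rw [h1]
    have hu : IsUnit e := by
      rw [PowerSeries.isUnit_iff_constantCoeff]
      exact isUnit_iff_ne_zero.2 he
    have h2 : PowerSeries.X ^ n ∣ x ↔ g ∣ x := by
      rw [hg, hu.mul_right_dvd]
    rw [h2]
    constructor
    · rintro ⟨y, rfl⟩; exact ⟨y, rfl⟩
    · rintro ⟨y, rfl⟩; exact ⟨y, rfl⟩
  rw [← hk]
  have E := c.quotKerEquivOfSurjective hc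
  exact ⟨Module.Finite.equiv E.symm, by rw [E.finrank_eq]; simp⟩

noncomputable section

def inflF (j k : ℕ) : MvPolynomial (Fin 2) ℂ :=
  (MvPolynomial.X 1 - MvPolynomial.X 0 ^ j) ^ 2 - MvPolynomial.X 0 ^ (2 * k + 1)

def parY (j k : ℕ) : PowerSeries ℂ := PowerSeries.X ^ (2 * j) + PowerSeries.X ^ (2 * k + 1)

def par (j k : ℕ) : Fin 2 → PowerSeries ℂ := ![PowerSeries.X ^ 2, parY j k]

abbrev R2 := MvPolynomial (Fin 2) ℂ

theorem cc2 : PowerSeries.constantCoeff (2 : PowerSeries ℂ) = 2 := map_ofNat _ 2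
theorem cc3 : PowerSeries.constantCoeff (3 : PowerSeries ℂ) = 3 := map_ofNat _ 3
theorem cc8 : PowerSeries.constantCoeff (8 : PowerSeries ℂ) = 8 := map_ofNat _ 8
theorem cc24 : PowerSeries.constantCoeff (24 : PowerSeries ℂ) = 24 := map_ofNat _ 24

theorem pd2 (i : Fin 2) : pderiv i (2 : R2) = 0 := (pderiv i).map_natCast 2
theorem pd3 (i : Fin 2) : pderiv i (3 : R2) = 0 := (pderiv i).map_natCast 3

theorem ev_dx (j k : ℕ) : dx (inflF (j+1) k) =
    - (2*(j+1)) * (X 0 : R2) ^ j * ((X 1 : R2) - (X 0 : R2) ^ (j+1)) - (2*k+1) * (X 0 : R2) ^ (2*k) := by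
  simp [dx, inflF, Derivation.leibniz_pow, pderiv_X, pd2, pd3]
  ring

theorem ev_dy (j k : ℕ) : dy (inflF j k) = 2 * ((X 1 : R2) - (X 0 : R2) ^ j) := by
  simp [dy, inflF, Derivation.leibniz_pow, pderiv_X, pd2, pd3]

theorem ev_dyx (j k : ℕ) : dy (dx (inflF (j+1) k)) = - (2*(j+1)) * (X 0 : R2) ^ j := by
  rw [ev_dx]
  simp [dy, Derivation.leibniz_pow, pderiv_X, pd2, pd3]
  try ring

theorem ev_dyy (j k : ℕ) : dy (dy (inflF j k)) = 2 := by
  rw [ev_dy]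
  simp [dy, Derivation.leibniz_pow, pderiv_X, pd2, pd3]

theorem ev_dyyy (j k : ℕ) : dy (dy (dy (inflF j k))) = 0 := by
  rw [ev_dyy]
  simp [dy, pd2, pd3]

theorem ev_dyyx (j k : ℕ) : dy (dy (dx (inflF (j+1) k))) = 0 := by
  rw [ev_dyx]
  simp [dy, Derivation.leibniz_pow, pderiv_X, pd2, pd3]

theorem ev_dxx (j k : ℕ) : dx (dx (inflF (j+2) (k+1))) =
    2*(j+2)^2 * (X 0 : R2) ^ (2*j+2) - 2*(j+2)*(j+1) * (X 0 : R2) ^ j * ((X 1 : R2) - (X 0 : R2) ^ (j+2))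
      - (2*k+3) *(2*k+2)* (X 0 : R2) ^ (2*k+1) := by
  have := ev_dx (j+1) (k+1)
  rw [show j+1+1 = j+2 from rfl] at this
  rw [this]
  simp [dx, Derivation.leibniz_pow, pderiv_X, pd2, pd3]
  have h : 2 * (k+1) - 1 = 2*k+1 := by omega
  rw [h]
  ring

theorem ev_dyxx (j k : ℕ) : dy (dx (dx (inflF (j+2) (k+1)))) =
    - 2*(j+2)*(j+1) * (X 0 : R2) ^ j := by
  rw [ev_dxx]
  simp [dy, Derivation.leibniz_pow, pderiv_X, pd2, pd3]
  try ring

theorem ev_dxxx (j k : ℕ) : dx (dx (dx (inflF (j+3) (k+1)))) =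
    6*(j+3)^2*(j+2) * (X 0 : R2) ^ (2*j+3) - 2*(j+3)*(j+2)*(j+1) * (X 0 : R2) ^ j * ((X 1 : R2) - (X 0 : R2) ^ (j+3))
      - (2*k+3) *(2*k+2)*(2*k+1)* (X 0 : R2) ^ (2*k) := by
  have := ev_dxx (j+1) k
  rw [show j+1+2 = j+3 from rfl] at this
  rw [this]
  simp [dx, Derivation.leibniz_pow, pderiv_X, pd2, pd3]
  ring

theorem infl_eval (j l : ℕ) :
    ∃ e : PowerSeries ℂ, PowerSeries.constantCoeff e ≠ 0 ∧
     aeval (par (j+2) (j+2+l)) (infl (inflF (j+2) (j+2+l)))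
       = PowerSeries.X ^ (6*(j+2+l) + 2*(j+2) - 1) * e := by
  refine ⟨- (8*(j+2)*(j+1) : PowerSeries ℂ)
    - (2*(2*(j+2+l)+1)*(2*j+3+2*l) : PowerSeries ℂ) * PowerSeries.X ^ (2*l+1), ?_, ?_⟩
  · simp [cc2, cc3, cc8, cc24]
    constructor <;> norm_cast
  · have h0 : 6*(j+2+l) + 2*(j+2) - 1 = 8*j+15+6*l := by omega
    have h1 : j+2+l = (j+1+l)+1 := by omega
    rw [h0, h1, infl, ev_dxx, ev_dyy, show j+2 = (j+1)+1 from rfl, ev_dyx, ev_dx, ev_dy]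
    simp [par, parY]
    ring

theorem vert_eval (j l : ℕ) :
    ∃ e : PowerSeries ℂ, PowerSeries.constantCoeff e ≠ 0 ∧
     aeval (par (j+3) (j+3+l)) (vert (inflF (j+3) (j+3+l)))
       = PowerSeries.X ^ (12*(j+3+l) + 2*(j+3)) * e := by
  obtain ⟨q, hq⟩ : ∃ q : PowerSeries ℂ, q = PowerSeries.X ^ (2*l+1) := ⟨_, rfl⟩
  obtain ⟨J, hJ⟩ : ∃ q : PowerSeries ℂ, q = j+3 := ⟨_, rfl⟩
  obtain ⟨K, hK⟩ : ∃ q : PowerSeries ℂ, q = j+3+l := ⟨_, rfl⟩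
  obtain ⟨Y1, h1⟩ : ∃ Y : PowerSeries ℂ, Y = 2*J + (2*K+1)*q := ⟨_, rfl⟩
  obtain ⟨Y2, h2⟩ : ∃ Y : PowerSeries ℂ, Y = 2*J*(2*J-1) + (2*K+1)*(2*K)*q := ⟨_, rfl⟩
  obtain ⟨Y3, h3⟩ : ∃ Y : PowerSeries ℂ,
    Y = 2*J*(2*J-1)*(2*J-2) + (2*K+1)*(2*K)*(2*K-1)*q := ⟨_, rfl⟩
  refine ⟨8*Y3 - 24*(Y2-Y1) +
    PowerSeries.X^(4*j+8)*(2*Y1^2*Y3 - 6*Y1*Y2*(Y2-Y1)), ?_, ?_⟩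
  · have : PowerSeries.constantCoeff (8*Y3 - 24*(Y2-Y1) +
      PowerSeries.X^(4*j+8)*(2*Y1^2*Y3 - 6*Y1*Y2*(Y2-Y1))) = (64*(j+3)*(j+2)*(j+1) : ℂ) := by
      subst hq hJ hK h1 h2 h3
      simp [cc2, cc3, cc8, cc24]
      ring
    rw [this]
    norm_cast
  · subst hq hJ hK h1 h2 h3
    have h1 : j+3+l = (j+2+l)+1 := by omega
    rw [vert, infl, h1, ev_dxxx, show j+3 = (j+1)+2 from rfl, ev_dyxx, ev_dxx, ev_dyyy, ev_dyy,
      show j+1+2 = (j+1+1)+1 from rfl, ev_dyyx, ev_dyx, ev_dx, ev_dy]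
    simp [par, parY]
    ring

theorem par_hasSubst (j k : ℕ) (hj : 1 ≤ j) : MvPowerSeries.HasSubst (par j k) := by
  apply MvPowerSeries.hasSubst_of_constantCoeff_zero
  intro s
  change PowerSeries.constantCoeff (par j k s) = 0
  fin_cases s
  · simp [par]
  · simp [par, parY]
    omega

def phi (j k : ℕ) (hj : 1 ≤ j) : MvPowerSeries (Fin 2) ℂ →ₐ[ℂ] PowerSeries ℂ :=
  MvPowerSeries.substAlgHom (par_hasSubst j k hj)

theorem phi_iota (j k : ℕ) (hj : 1 ≤ j) (p : MvPolynomial (Fin 2) ℂ) :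
    phi j k hj (ι p) = aeval (par j k) p :=
  MvPowerSeries.substAlgHom_coe (par_hasSubst j k hj) p

theorem phi_F (j k : ℕ) (hj : 1 ≤ j) : phi j k hj (ι (inflF j k)) = 0 := by
  rw [phi_iota]
  simp [inflF, par, parY]
  ring

theorem phi_X0 (j k : ℕ) (hj : 1 ≤ j) : phi j k hj (MvPowerSeries.X 0) = PowerSeries.X ^ 2 :=
  MvPowerSeries.substAlgHom_X (par_hasSubst j k hj) 0

theorem phi_X1 (j k : ℕ) (hj : 1 ≤ j) : phi j k hj (MvPowerSeries.X 1) = parY j k :=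
  MvPowerSeries.substAlgHom_X (par_hasSubst j k hj) 1

def sig : Fin 2 ≃ Option Unit where
  toFun := ![some (), none]
  invFun := fun o => o.elim 1 (fun _ => 0)
  left_inv := by intro i; fin_cases i <;> rfl
  right_inv := by intro o; rcases o with _ | _ <;> rfl

def eqv : MvPowerSeries (Fin 2) ℂ ≃ₐ[ℂ] PowerSeries (PowerSeries ℂ) :=
  (MvPowerSeries.renameEquiv ℂ sig).trans (MvPowerSeries.optionEquivLeft Unit ℂ)

theorem eqv_X0 : eqv (MvPowerSeries.X 0) = PowerSeries.C PowerSeries.X := by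
  have : eqv (MvPowerSeries.X 0) = MvPowerSeries.optionEquivLeft Unit ℂ
    (MvPowerSeries.rename sig (MvPowerSeries.X 0)) := rfl
  rw [this, MvPowerSeries.rename_X]
  exact MvPowerSeries.optionEquivLeft_X_some ()

theorem eqv_X1 : eqv (MvPowerSeries.X 1) = PowerSeries.X := by
  have : eqv (MvPowerSeries.X 1) = MvPowerSeries.optionEquivLeft Unit ℂ
    (MvPowerSeries.rename sig (MvPowerSeries.X 1)) := rfl
  rw [this, MvPowerSeries.rename_X]
  exact MvPowerSeries.optionEquivLeft_X_none

theorem iota_X (i : Fin 2) : ι (MvPolynomial.X i) = MvPowerSeries.X i := by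
  simp [ι]

theorem iota_F (j k : ℕ) : ι (inflF j k) =
    (MvPowerSeries.X 1 - MvPowerSeries.X 0 ^ j) ^ 2 - MvPowerSeries.X 0 ^ (2 * k + 1) := by
  rw [inflF]
  simp only [map_sub, map_pow, iota_X]

theorem adic : IsAdicComplete (IsLocalRing.maximalIdeal (PowerSeries ℂ)) (PowerSeries ℂ) := by
  rw [PowerSeries.maximalIdeal_eq_span_X]
  infer_instance

def emb : PowerSeries ℂ →ₐ[ℂ] MvPowerSeries (Fin 2) ℂ :=
  { (eqv.symm.toAlgHom.toRingHom.comp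
      (PowerSeries.C : PowerSeries ℂ →+* PowerSeries (PowerSeries ℂ))) with
    commutes' := by
      intro r
      change eqv.symm (PowerSeries.C (algebraMap ℂ (PowerSeries ℂ) r)) = _
      rw [AlgEquiv.symm_apply_eq, AlgEquiv.commutes]
      exact (PowerSeries.algebraMap_apply (R := ℂ) (A := PowerSeries ℂ)).symm }

theorem emb_apply (a : PowerSeries ℂ) : emb a = eqv.symm (PowerSeries.C a) := rfl

theorem emb_X : emb PowerSeries.X = MvPowerSeries.X 0 := by
  rw [emb_apply, ← eqv_X0, AlgEquiv.symm_apply_apply]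

theorem division (j k : ℕ) (hj : 1 ≤ j) (h : MvPowerSeries (Fin 2) ℂ) :
    ∃ q a b, h = ι (inflF j k) * q + emb a + emb b * MvPowerSeries.X 1 := by
  have := adic
  have hF : PowerSeries.map (IsLocalRing.residue (PowerSeries ℂ)) (eqv (ι (inflF j k)))
      = PowerSeries.X ^ 2 := by
    have hX : IsLocalRing.residue (PowerSeries ℂ) PowerSeries.X = 0 := by
      rw [IsLocalRing.residue_eq_zero_iff, PowerSeries.maximalIdeal_eq_span_X]
      exact Ideal.mem_span_singleton_self _
    rw [iota_F]
    simp only [map_sub, map_pow, eqv_X0, eqv_X1, PowerSeries.map_X, PowerSeries.map_C, hX, map_zero]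
    rw [zero_pow (by omega), zero_pow (by omega)]
    simp
  obtain ⟨q, r, hqr⟩ := PowerSeries.exists_isWeierstrassDivision (eqv h)
    (g := eqv (ι (inflF j k))) (by rw [hF]; exact pow_ne_zero _ PowerSeries.X_ne_zero)
  have hd := hqr.degree_lt
  have he := hqr.eq_mul_add
  have hF' : PowerSeries.map (Ideal.Quotient.mk (IsLocalRing.maximalIdeal (PowerSeries ℂ)))
    (eqv (ι (inflF j k))) = PowerSeries.X ^ 2 := hF
  have : Nontrivial (PowerSeries ℂ ⧸ IsLocalRing.maximalIdeal (PowerSeries ℂ)) :=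
    Ideal.Quotient.nontrivial_iff.2 (Ideal.IsPrime.ne_top inferInstance)
  rw [hF', PowerSeries.order_X_pow] at hd
  have hd1 : r.degree ≤ 1 := by
    have : r.degree < (2 : ℕ) := hd
    exact Order.le_of_lt_succ this
  rw [Polynomial.eq_X_add_C_of_degree_le_one hd1] at he
  refine ⟨eqv.symm q, r.coeff 0, r.coeff 1, ?_⟩
  apply eqv.injective
  simp only [map_add, map_mul, emb_apply, AlgEquiv.apply_symm_apply, eqv_X1]
  rw [he]
  simp
  ring

theorem hom_eq (θ : PowerSeries ℂ →ₐ[ℂ] PowerSeries ℂ) (h : θ PowerSeries.X = PowerSeries.X ^ 2)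
    (p : PowerSeries ℂ) : θ p = PowerSeries.expand 2 two_ne_zero p := by
  set E : PowerSeries ℂ →ₐ[ℂ] PowerSeries ℂ := PowerSeries.expand 2 two_ne_zero with hE
  have hEX : E PowerSeries.X = PowerSeries.X ^ 2 := PowerSeries.expand_X 2 two_ne_zero
  have hp : ∀ q : Polynomial ℂ, θ (q : PowerSeries ℂ) = E (q : PowerSeries ℂ) := by
    have : θ.comp (Polynomial.coeToPowerSeries.algHom ℂ)
        = E.comp (Polynomial.coeToPowerSeries.algHom ℂ) := by
      apply Polynomial.algHom_ext
      simp [h, hEX]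
    intro q
    simpa using DFunLike.congr_fun this q
  ext n
  have hs := PowerSeries.eq_X_pow_mul_shift_add_trunc (n+1) p
  have hd : PowerSeries.X ^ (n+1) ∣ θ p - E p := by
    generalize PowerSeries.trunc (n+1) p = t at hs
    generalize (PowerSeries.mk fun i => PowerSeries.coeff (i + (n+1)) p) = s at hs
    subst hs
    simp only [map_add, map_mul, map_pow, h, hEX, hp]
    rw [add_sub_add_right_eq_sub, ← mul_sub, ← pow_mul]
    exact Dvd.dvd.mul_right (pow_dvd_pow _ (by omega)) _
  have := (PowerSeries.X_pow_dvd_iff.1 hd) n (by omega)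
  rw [map_sub, sub_eq_zero] at this
  exact this

theorem phi_emb (j k : ℕ) (hj : 1 ≤ j) (a : PowerSeries ℂ) :
    phi j k hj (emb a) = PowerSeries.expand 2 two_ne_zero a := by
  apply hom_eq ((phi j k hj).comp emb)
  rw [AlgHom.comp_apply, emb_X, phi_X0]

theorem phi_ker (j k : ℕ) (hj : 1 ≤ j) (h : MvPowerSeries (Fin 2) ℂ) (h0 : phi j k hj h = 0) :
    ∃ q, h = ι (inflF j k) * q := by
  obtain ⟨q, a, b, rfl⟩ := division j k hj h
  simp only [map_add, map_mul, phi_F, phi_emb, phi_X1, parY, zero_mul, zero_add] at h0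
  have h1 : PowerSeries.expand 2 two_ne_zero (a + b * PowerSeries.X ^ j) +
      PowerSeries.expand 2 two_ne_zero b * PowerSeries.X ^ (2*k+1) = 0 := by
    rw [← h0]
    simp only [map_add, map_mul, map_pow, PowerSeries.expand_X]
    ring
  have hb : b = 0 := by
    ext m
    have := congrArg (PowerSeries.coeff (2*m + (2*k+1))) h1
    rw [map_add, PowerSeries.coeff_mul_X_pow, PowerSeries.coeff_expand_mul,
      PowerSeries.coeff_expand_of_not_dvd _ _ _ (by omega)] at this
    simpa using this
  subst hb
  have ha : a = 0 := by
    ext m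
    have := congrArg (PowerSeries.coeff (2*m)) h1
    rw [map_add, PowerSeries.coeff_expand_mul] at this
    simpa using this
  subst ha
  exact ⟨q, by simp⟩

theorem even_odd (v : PowerSeries ℂ) : ∃ a b, v = PowerSeries.expand 2 two_ne_zero a +
    PowerSeries.X * PowerSeries.expand 2 two_ne_zero b := by
  refine ⟨PowerSeries.mk fun n => PowerSeries.coeff (2*n) v,
    PowerSeries.mk fun n => PowerSeries.coeff (2*n+1) v, ?_⟩
  ext n
  rw [map_add]
  obtain ⟨m, rfl | rfl⟩ := n.even_or_odd'
  · rw [PowerSeries.coeff_expand_mul]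
    rcases m with _ | m
    · simp
    · rw [show 2*(m+1) = (2*m+1)+1 by ring, PowerSeries.coeff_succ_X_mul,
        PowerSeries.coeff_expand_of_not_dvd _ _ _ (by omega)]
      simp
      rfl
  · rw [PowerSeries.coeff_succ_X_mul, PowerSeries.coeff_expand_mul,
        PowerSeries.coeff_expand_of_not_dvd _ _ _ (by omega)]
    simp

theorem phi_codim (j k : ℕ) (hj : 1 ≤ j) :
    FiniteDimensional ℂ (PowerSeries ℂ ⧸ LinearMap.range (phi j k hj).toLinearMap) := by
  have h := (aux_quot (2*k) (PowerSeries.X ^ (2*k)) 1 (by simp) (by simp)).1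
  have hle : LinearMap.range (LinearMap.mulLeft ℂ (PowerSeries.X ^ (2*k) : PowerSeries ℂ)) ≤
      LinearMap.range (phi j k hj).toLinearMap := by
    rintro _ ⟨v, rfl⟩
    obtain ⟨a, b, rfl⟩ := even_odd v
    refine ⟨MvPowerSeries.X 0 ^ k * emb a +
      (MvPowerSeries.X 1 - MvPowerSeries.X 0 ^ j) * emb b, ?_⟩
    simp only [AlgHom.toLinearMap_apply, map_add, map_mul, map_sub, map_pow, phi_emb, phi_X0,
      phi_X1, parY, LinearMap.mulLeft_apply]
    ring
  exact Module.Finite.of_surjective (Submodule.factor hle) (Submodule.factor_surjective hle)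

theorem main_aux (j k : ℕ) (hj : 1 ≤ j) (g : MvPolynomial (Fin 2) ℂ) (n : ℕ)
    (hg : ∃ e : PowerSeries ℂ, PowerSeries.constantCoeff e ≠ 0 ∧
      aeval (par j k) g = PowerSeries.X ^ n * e) :
    FiniteDimensional ℂ (MvPowerSeries (Fin 2) ℂ ⧸ Ideal.span {ι (inflF j k), ι g}) ∧
    interMult (inflF j k) g = n := by
  obtain ⟨e, he, hge⟩ := hg
  rw [← phi_iota j k hj] at hge
  have hg0 : phi j k hj (ι g) ≠ 0 := by
    rw [hge]
    refine mul_ne_zero (pow_ne_zero _ PowerSeries.X_ne_zero) ?_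
    rintro rfl
    simp at he
  obtain ⟨f1, d1⟩ := aux_quot n _ e he hge
  have f2 := phi_codim j k hj
  set I := Ideal.span {ι (inflF j k), ι g} with hI
  have key := aux_lin (phi j k hj).toLinearMap (LinearMap.mulLeft ℂ (phi j k hj (ι g)))
    (fun x y hxy => mul_left_cancel₀ hg0 hxy)
    (by
      rintro _ ⟨w, rfl⟩
      exact ⟨ι g * w, by simp⟩)
    (I.restrictScalars ℂ)
    (by
      intro s
      rw [Submodule.restrictScalars_mem, hI, Ideal.mem_span_pair]
      constructor
      · rintro ⟨a, b, rfl⟩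
        refine ⟨phi j k hj b, ⟨b, rfl⟩, ?_⟩
        simp [phi_F, mul_comm]
      · rintro ⟨_, ⟨b, rfl⟩, hb⟩
        obtain ⟨q, hq⟩ := phi_ker j k hj (s - ι g * b) (by
          rw [map_sub, map_mul, sub_eq_zero]
          exact hb.symm)
        refine ⟨q, b, ?_⟩
        rw [mul_comm q, ← hq]
        ring)
  rw [d1] at key
  exact key

end

theorem inflection_vertex_numbers_A2k
    (k j : ℕ) (hj : 2 ≤ j) (hjk : j ≤ k) :
    (FiniteDimensional ℂ (MvPowerSeries (Fin 2) ℂ ⧸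
        Ideal.span {ι ((MvPolynomial.X 1 - MvPolynomial.X 0 ^ j) ^ 2 -
            MvPolynomial.X 0 ^ (2 * k + 1)),
          ι (infl ((MvPolynomial.X 1 - MvPolynomial.X 0 ^ j) ^ 2 -
            MvPolynomial.X 0 ^ (2 * k + 1)))}) ∧
      interMult ((MvPolynomial.X 1 - MvPolynomial.X 0 ^ j) ^ 2 -
          MvPolynomial.X 0 ^ (2 * k + 1))
        (infl ((MvPolynomial.X 1 - MvPolynomial.X 0 ^ j) ^ 2 -
          MvPolynomial.X 0 ^ (2 * k + 1)))
        = 6 * k + 2 * j - 1) ∧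
    (3 ≤ j →
      FiniteDimensional ℂ (MvPowerSeries (Fin 2) ℂ ⧸
        Ideal.span {ι ((MvPolynomial.X 1 - MvPolynomial.X 0 ^ j) ^ 2 -
            MvPolynomial.X 0 ^ (2 * k + 1)),
          ι (vert ((MvPolynomial.X 1 - MvPolynomial.X 0 ^ j) ^ 2 -
            MvPolynomial.X 0 ^ (2 * k + 1)))}) ∧
      interMult ((MvPolynomial.X 1 - MvPolynomial.X 0 ^ j) ^ 2 -
          MvPolynomial.X 0 ^ (2 * k + 1))
        (vert ((MvPolynomial.X 1 - MvPolynomial.X 0 ^ j) ^ 2 -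
          MvPolynomial.X 0 ^ (2 * k + 1)))
        = 12 * k + 2 * j) := by
  constructor
  · obtain ⟨i, rfl⟩ : ∃ i, j = i + 2 := ⟨j - 2, by omega⟩
    obtain ⟨l, rfl⟩ : ∃ l, k = i + 2 + l := ⟨k - (i + 2), by omega⟩
    exact main_aux (i+2) (i+2+l) (by omega) _ _ (infl_eval i l)
  · intro hj3
    obtain ⟨i, rfl⟩ : ∃ i, j = i + 3 := ⟨j - 3, by omega⟩
    obtain ⟨l, rfl⟩ : ∃ l, k = i + 3 + l := ⟨k - (i + 3), by omega⟩
    exact main_aux (i+3) (i+3+l) (by omega) _ _ (vert_eval i l)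
end
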